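/- arXiv:2508.08335 — 4 statements merged into one kernel-verified Lean document; each statement's English description precedes it below -/
import Mathlib

section
/- Let c_1 < c_2 < c_3 < ... be the increasing enumeration of the cyclic numbers and, for positive real x, let C(x) denote the number of cyclic numbers ≤ x. Then x / c_{C(x)} tends to 1 as x → ∞ (here c_{C(x)} is the largest cyclic number not exceeding x). -/
open Filter Asymptotics Real

/-- A positive integer `n` is *cyclic* if `gcd(n, φ(n)) = 1`. -/
def IsCyclicNum (n : ℕ) : Prop := 0 < n ∧ Nat.gcd n (Nat.totient n) = 1

instance : DecidablePred IsCyclicNum := fun n =>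
  decidable_of_iff (0 < n ∧ Nat.gcd n (Nat.totient n) = 1) Iff.rfl

/-- The `n`-th cyclic number, indexed from 1: `cyclicNum 1 = 1`, `cyclicNum 2 = 2`, .... -/
noncomputable def cyclicNum (n : ℕ) : ℕ := Nat.nth IsCyclicNum (n - 1)

/-- The number of cyclic numbers less than or equal to the real number `x`. -/
noncomputable def cyclicCount (x : ℝ) : ℕ :=
  ((Finset.range (⌊x⌋₊ + 1)).filter IsCyclicNum).card

/-!
Every short interval `[a, a + H)` with `H ≥ ε (a + H)` contains a cyclic number once `N = a + H` is
large: the integers without prime factors up to `y` outnumber the noncyclic ones among them.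

A noncyclic `n` is divisible, for some prime `r`, by `r ^ 2` or by `r q` with `q ≡ 1 (mod r)`. If
`n` has no prime factor up to `y` then `r > y`, and summing over `r` shows that there are at most
`N (2 + log N) / y` such `n ≤ N`.

For the lower bound take `z` of order `log N`, small enough for the primorial of `z` to be
negligible against `N`. Coprimality to that primorial is periodic, so sieving by the primes up to
`z` is exact and leaves a proportion `∏_{p ≤ z} (1 - 1/p)` of the interval. The primes in `(z, y]`
with `y = z ^ (17/16)` are then removed by a union bound, which by Chebyshev's estimate costs at
most a quarter of the survivors. Since the Mertens product decays slower than any power of `z`,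
it beats `log N / y`, which is of order `z ^ (-1/16)`.
-/

open Finset

section PrimeReciprocals

theorem one_sub_sum_le_prod_one_sub {ι R : Type*} [CommRing R] [LinearOrder R]
    [IsStrictOrderedRing R] {s : Finset ι} {f : ι → R}
    (hf₀ : ∀ i ∈ s, 0 ≤ f i) (hf₁ : ∀ i ∈ s, f i ≤ 1) :
    1 - ∑ i ∈ s, f i ≤ ∏ i ∈ s, (1 - f i) := by
  classical
  induction s using Finset.induction_on with
  | empty => simp
  | insert a s ha ih =>
    rw [forall_mem_insert] at hf₀ hf₁
    have hsum : 0 ≤ ∑ i ∈ s, f i := sum_nonneg hf₀.2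
    rw [sum_insert ha, prod_insert ha]
    calc 1 - (f a + ∑ i ∈ s, f i)
        ≤ (1 - f a) * (1 - ∑ i ∈ s, f i) := by nlinarith [mul_nonneg hf₀.1 hsum]
      _ ≤ (1 - f a) * ∏ i ∈ s, (1 - f i) :=
        mul_le_mul_of_nonneg_left (ih hf₀.2 hf₁.2) (sub_nonneg.2 hf₁.1)

/-- The sum `∑_{m < p ≤ n} 1/p` over primes: an upper bound for the proportion of integers lost when
sieving by the primes in `(m, n]`. -/
noncomputable def primeInvSum (m n : ℕ) : ℝ := ∑ p ∈ Ioc m n with p.Prime, (p : ℝ)⁻¹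

theorem primeInvSum_add {l m n : ℕ} (hlm : l ≤ m) (hmn : m ≤ n) :
    primeInvSum l m + primeInvSum m n = primeInvSum l n := by
  simp_rw [primeInvSum, sum_filter]
  exact sum_Ioc_consecutive _ hlm hmn

theorem primeInvSum_two_mul_le {n : ℕ} (hn : 1 < n) :
    primeInvSum n (2 * n) ≤ 2 * log 4 / log n := by
  have hlog : 0 < log n := log_pos (by exact_mod_cast hn)
  have inv_le_log_div {p : ℕ} (hp : n < p) : (p : ℝ)⁻¹ ≤ log p / (n * log n) := by
    have hnp : (n : ℝ) ≤ p := by exact_mod_cast hp.le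
    calc (p : ℝ)⁻¹ ≤ (n : ℝ)⁻¹ := by gcongr
      _ = log n / (n * log n) := by field_simp
      _ ≤ log p / (n * log n) := by gcongr
  calc primeInvSum n (2 * n)
      ≤ ∑ p ∈ Ioc n (2 * n) with p.Prime, log p / (n * log n) := by
        refine sum_le_sum fun p hp ↦ inv_le_log_div ?_
        exact (mem_Ioc.1 (mem_filter.1 hp).1).1
    _ ≤ ∑ p ∈ Nat.primesLE (2 * n), log p / (n * log n) := by
        rw [Nat.primesLE_eq_filter_Ioc_zero]
        refine sum_le_sum_of_subset_of_nonneg (by gcongr; positivity) fun p _ _ ↦ ?_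
        positivity
    _ = Chebyshev.theta (2 * n : ℕ) / (n * log n) := by
        rw [← sum_div, Chebyshev.theta_eq_sum_primesLE_log]
    _ ≤ log 4 * (2 * n : ℕ) / (n * log n) := by
        gcongr
        exact Chebyshev.theta_le_log4_mul_x (by positivity)
    _ = 2 * log 4 / log n := by
        push_cast
        field_simp

theorem primeInvSum_two_pow_le {k : ℕ} (hk : k ≠ 0) (i : ℕ) :
    primeInvSum (2 ^ k) (2 ^ (k + i)) ≤ 4 * i / k := by
  induction i with
  | zero => simp [primeInvSum]
  | succ i ih =>
    have dyadic_block :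
        primeInvSum (2 ^ (k + i)) (2 ^ (k + (i + 1))) ≤ 4 / k := by
      rw [← add_assoc, pow_succ']
      refine (primeInvSum_two_mul_le (Nat.one_lt_two_pow (by lia))).trans ?_
      have log_four : log 4 = 2 * log 2 := by
        rw [← log_rpow (by norm_num)]
        norm_num
      calc 2 * log 4 / log ((2 ^ (k + i) : ℕ) : ℝ) = 4 / ((k : ℝ) + i) := by
            push_cast
            rw [log_four, log_pow]
            push_cast
            field_simp
            norm_num
        _ ≤ 4 / k := by
            gcongr
            exact le_add_of_nonneg_right i.cast_nonneg
    rw [← primeInvSum_add (pow_le_pow_right₀ one_le_two (Nat.le_add_right k i))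
      (pow_le_pow_right₀ one_le_two (by lia))]
    calc _ ≤ 4 * (i : ℝ) / k + 4 / k := add_le_add ih dyadic_block
      _ = 4 * (i + 1 : ℕ) / k := by
        push_cast
        ring

end PrimeReciprocals

section MertensProd

/-- The Mertens product `∏_{p ≤ n} (1 - 1/p)` over primes: the density of the integers having no
prime factor up to `n`. -/
noncomputable def mertensProd (n : ℕ) : ℝ := ∏ p ∈ Nat.primesLE n, (1 - (p : ℝ)⁻¹)

theorem mertensProd_pos (n : ℕ) : 0 < mertensProd n :=
  prod_pos fun p hp ↦ sub_pos.2 <| inv_lt_one_of_one_lt₀ <| by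
    exact_mod_cast Nat.one_lt_of_mem_primesLE hp

theorem totient_primorial (n : ℕ) :
    (Nat.totient (primorial n) : ℝ) = primorial n * mertensProd n := by
  have h := congrArg (Rat.cast : ℚ → ℝ) (Nat.totient_eq_mul_prod_factors (primorial n))
  rw [primeFactors_primorial] at h
  push_cast at h
  exact h

theorem mertensProd_mul_one_sub_sum_le {m n : ℕ} (hmn : m ≤ n) :
    mertensProd m * (1 - primeInvSum m n) ≤ mertensProd n := by
  have split : mertensProd n = mertensProd m * ∏ p ∈ Ioc m n with p.Prime, (1 - (p : ℝ)⁻¹) := by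
    simp_rw [mertensProd, Nat.primesLE_eq_filter_Ioc_zero, prod_filter]
    exact (prod_Ioc_consecutive _ m.zero_le hmn).symm
  rw [split]
  refine mul_le_mul_of_nonneg_left (one_sub_sum_le_prod_one_sub (fun p _ ↦ by positivity) ?_)
    (mertensProd_pos m).le
  intro p hp
  exact inv_le_one_of_one_le₀ (by exact_mod_cast (mem_filter.1 hp).2.one_le)

theorem tendsto_two_pow_mul_mertensProd {m : ℕ} (hm : m ≠ 0) :
    Tendsto (fun k : ℕ ↦ 2 ^ k * mertensProd (2 ^ (m * k))) atTop atTop := by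
  have growth {k : ℕ} (hk : 16 ≤ k) : 3 / 2 * (2 ^ k * mertensProd (2 ^ (m * k))) ≤
      2 ^ (k + 1) * mertensProd (2 ^ (m * (k + 1))) := by
    have hk' : (16 : ℝ) ≤ k := by exact_mod_cast hk
    have block_sum : primeInvSum (2 ^ (m * k)) (2 ^ (m * k + m)) ≤ 1 / 4 := by
      refine (primeInvSum_two_pow_le (mul_ne_zero hm (by lia)) m).trans ?_
      push_cast
      field_simp
      linarith
    have hstep := mertensProd_mul_one_sub_sum_le
      (pow_le_pow_right₀ one_le_two (Nat.le_add_right (m * k) m))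
    calc 3 / 2 * (2 ^ k * mertensProd (2 ^ (m * k)))
        = 2 ^ (k + 1) * (mertensProd (2 ^ (m * k)) * (1 - 1 / 4)) := by ring
      _ ≤ 2 ^ (k + 1) * (mertensProd (2 ^ (m * k)) *
            (1 - primeInvSum (2 ^ (m * k)) (2 ^ (m * k + m)))) := by
          gcongr
          exact (mertensProd_pos _).le
      _ ≤ 2 ^ (k + 1) * mertensProd (2 ^ (m * (k + 1))) := by
          rw [mul_add_one]
          gcongr
  rw [← tendsto_add_atTop_iff_nat 16]
  refine tendsto_atTop_of_geom_le (c := 3 / 2) ?_ (by norm_num) fun k ↦ ?_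
  · exact mul_pos (by positivity) (mertensProd_pos _)
  · simpa only [add_right_comm] using growth (Nat.le_add_left 16 k)

end MertensProd

section Sieve

theorem card_Ico_mul_filter_coprime (P a j : ℕ) :
    #{n ∈ Ico a (a + P * j) | P.Coprime n} = P.totient * j := by
  induction j with
  | zero => simp
  | succ j ih =>
    rw [← Ico_union_Ico_eq_Ico (b := a + P * j) (by lia) (by lia), filter_union,
      card_union_of_disjoint (disjoint_filter_filter (Ico_disjoint_Ico_consecutive _ _ _)), ih,
      mul_add_one P, ← add_assoc, Nat.filter_coprime_Ico_eq_totient, mul_add_one]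

theorem totient_mul_sub_one_le_card_Ico_filter_coprime (P a H : ℕ) :
    (P.totient : ℝ) * (H / P - 1) ≤ #{n ∈ Ico a (a + H) | P.Coprime n} := by
  have hdiv : (H : ℝ) / P - 1 ≤ (H / P : ℕ) := by
    rw [← Nat.floor_div_eq_div (K := ℝ)]
    exact (Nat.sub_one_lt_floor _).le
  calc (P.totient : ℝ) * (H / P - 1) ≤ P.totient * (H / P : ℕ) := by gcongr
    _ = #{n ∈ Ico a (a + P * (H / P)) | P.Coprime n} := by
      rw [card_Ico_mul_filter_coprime, Nat.cast_mul]
    _ ≤ #{n ∈ Ico a (a + H) | P.Coprime n} := by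
      gcongr
      exact Nat.mul_div_le H P

theorem card_Ico_filter_coprime_dvd_le {P p : ℕ} (hP : P ≠ 0) (hp : 0 < p) (a H : ℕ) :
    #{n ∈ Ico a (a + H) | P.Coprime n ∧ p ∣ n} ≤ P.totient * ((H / p + 1) / P + 1) := by
  refine le_trans ?_ (Nat.Ico_filter_coprime_le (a ⌈/⌉ p) (H / p + 1) hP)
  refine card_le_card_of_injOn (· / p) ?_ ?_
  · rintro n hn
    simp only [coe_filter, mem_Ico, Set.mem_ofPred_eq] at hn ⊢
    obtain ⟨⟨han, hnH⟩, hcop, m, rfl⟩ := hn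
    rw [Nat.mul_div_cancel_left m hp]
    refine ⟨⟨(ceilDiv_le_iff_le_mul hp).2 han, ?_⟩, hcop.coprime_dvd_right (dvd_mul_left m p)⟩
    have hle : a ≤ p * (a ⌈/⌉ p) := (ceilDiv_le_iff_le_mul hp).1 le_rfl
    have hlt : m - a ⌈/⌉ p ≤ H / p := by
      rw [Nat.le_div_iff_mul_le hp, mul_comm, Nat.mul_sub]
      lia
    lia
  · intro n hn n' hn' h
    simp only [coe_filter, Set.mem_ofPred_eq] at hn hn'
    exact (Nat.div_left_inj hn.2.2 hn'.2.2).1 h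

theorem cast_card_Ico_filter_coprime_dvd_le {P p : ℕ} (hP : P ≠ 0) (hp : 0 < p) (a H : ℕ) :
    (#{n ∈ Ico a (a + H) | P.Coprime n ∧ p ∣ n} : ℝ) ≤
      P.totient * (H / P * (p : ℝ)⁻¹ + 2) := by
  have hP₁ : (1 : ℝ) ≤ P := by exact_mod_cast Nat.one_le_iff_ne_zero.2 hP
  have hdiv : (((H / p + 1) / P + 1 : ℕ) : ℝ) ≤ H / P * (p : ℝ)⁻¹ + 2 := by
    calc (((H / p + 1) / P + 1 : ℕ) : ℝ) ≤ ((H / p : ℝ) + 1) / P + 1 := by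
          push_cast
          grw [Nat.cast_div_le]
          push_cast
          grw [Nat.cast_div_le]
      _ = H / P * (p : ℝ)⁻¹ + (P : ℝ)⁻¹ + 1 := by ring
      _ ≤ H / P * (p : ℝ)⁻¹ + 2 := by linarith [inv_le_one_of_one_le₀ hP₁]
  grw [← hdiv]
  exact_mod_cast card_Ico_filter_coprime_dvd_le hP hp a H

theorem le_card_Ico_filter_coprime_forall_not_dvd {P : ℕ} (hP : P ≠ 0) {T : Finset ℕ}
    (hT : ∀ p ∈ T, 0 < p) (a H : ℕ) :
    (P.totient : ℝ) * (H / P * (1 - ∑ p ∈ T, (p : ℝ)⁻¹) - (1 + 2 * #T)) ≤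
      #{n ∈ Ico a (a + H) | P.Coprime n ∧ ∀ p ∈ T, ¬ p ∣ n} := by
  classical
  have cover : {n ∈ Ico a (a + H) | P.Coprime n} ⊆
      {n ∈ Ico a (a + H) | P.Coprime n ∧ ∀ p ∈ T, ¬ p ∣ n} ∪
        T.biUnion fun p ↦ {n ∈ Ico a (a + H) | P.Coprime n ∧ p ∣ n} := by
    intro n
    simp only [mem_union, mem_filter, mem_biUnion]
    grind
  have card_le : (#{n ∈ Ico a (a + H) | P.Coprime n} : ℝ) ≤
      #{n ∈ Ico a (a + H) | P.Coprime n ∧ ∀ p ∈ T, ¬ p ∣ n} +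
        ∑ p ∈ T, (#{n ∈ Ico a (a + H) | P.Coprime n ∧ p ∣ n} : ℝ) := by
    exact_mod_cast (card_le_card cover).trans <| (card_union_le _ _).trans <| by
      gcongr
      exact card_biUnion_le
  have multiples_le := sum_le_sum fun p (hp : p ∈ T) ↦
    cast_card_Ico_filter_coprime_dvd_le hP (hT p hp) a H
  rw [← mul_sum, sum_add_distrib, ← mul_sum, sum_const, nsmul_eq_mul] at multiples_le
  linarith [totient_mul_sub_one_le_card_Ico_filter_coprime P a H]

theorem le_card_Ico_filter_coprime_primorial (z y a H : ℕ) :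
    (H * (1 - primeInvSum z y) - primorial z * (1 + 2 * y)) *
      mertensProd z ≤ #{n ∈ Ico a (a + H) | (primorial y).Coprime n} := by
  have hprimorial : (0 : ℝ) < primorial z := by exact_mod_cast primorial_pos z
  have hcard : (#{p ∈ Ioc z y | p.Prime} : ℝ) ≤ y := by
    exact_mod_cast (card_filter_le _ _).trans (by simp)
  have coprime_of_not_dvd {n : ℕ} (hz : (primorial z).Coprime n)
      (hzy : ∀ p ∈ {p ∈ Ioc z y | p.Prime}, ¬ p ∣ n) : (primorial y).Coprime n := by
    refine Nat.coprime_of_dvd fun p hp hpy hpn ↦ ?_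
    rw [hp.dvd_primorial_iff] at hpy
    rcases le_or_gt p z with hpz | hpz
    · exact hp.not_dvd_one (hz ▸ Nat.dvd_gcd (hp.dvd_primorial_iff.2 hpz) hpn)
    · exact hzy p (mem_filter.2 ⟨mem_Ioc.2 ⟨hpz, hpy⟩, hp⟩) hpn
  calc (H * (1 - primeInvSum z y) - primorial z * (1 + 2 * y)) *
        mertensProd z
      = (primorial z).totient * (H / primorial z * (1 - primeInvSum z y) -
          (1 + 2 * y)) := by
        rw [totient_primorial]
        field_simp
    _ ≤ (primorial z).totient * (H / primorial z * (1 - primeInvSum z y) -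
          (1 + 2 * #{p ∈ Ioc z y | p.Prime})) := by gcongr
    _ ≤ #{n ∈ Ico a (a + H) | (primorial z).Coprime n ∧
          ∀ p ∈ {p ∈ Ioc z y | p.Prime}, ¬ p ∣ n} :=
        le_card_Ico_filter_coprime_forall_not_dvd (primorial_ne_zero z)
          (fun p hp ↦ (mem_filter.1 hp).2.pos) a H
    _ ≤ #{n ∈ Ico a (a + H) | (primorial y).Coprime n} := by
        gcongr with n
        exact fun h ↦ coprime_of_not_dvd h.1 h.2

end Sieve

section CyclicNumbers

theorem isCyclicNum_of_prime {p : ℕ} (hp : p.Prime) : IsCyclicNum p := by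
  refine ⟨hp.pos, ?_⟩
  rw [Nat.totient_prime hp]
  exact (Nat.coprime_self_sub_right hp.one_le).2 (Nat.coprime_one_right p)

/-- The prime `r` obstructs the cyclicity of a multiple `n` of `r` when `r ^ 2 ∣ n`, or when `n`
is divisible by `r * q` for some `q > 1` congruent to `1` modulo `r`. -/
def IsObstruction (r n : ℕ) : Prop := r ^ 2 ∣ n ∨ ∃ k, 0 < k ∧ r * (k * r + 1) ∣ n

theorem IsObstruction.dvd {r n : ℕ} (h : IsObstruction r n) : r ∣ n := by
  rcases h with h | ⟨k, -, h⟩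
  · exact (dvd_pow_self r two_ne_zero).trans h
  · exact (dvd_mul_right r _).trans h

theorem exists_prime_isObstruction {n : ℕ} (hn : 0 < n) (hcyc : ¬ IsCyclicNum n) :
    ∃ r, r.Prime ∧ IsObstruction r n := by
  obtain ⟨r, hr, hdvd⟩ := Nat.exists_prime_and_dvd fun h ↦ hcyc ⟨hn, h⟩
  obtain ⟨hrn, hrφ⟩ := Nat.dvd_gcd_iff.1 hdvd
  refine ⟨r, hr, ?_⟩
  rw [Nat.totient_eq_prod_factorization hn.ne', Finsupp.prod, hr.prime.dvd_finsetProd_iff] at hrφ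
  obtain ⟨q, hq, hrq⟩ := hrφ
  rw [Nat.support_factorization] at hq
  have hqp : q.Prime := Nat.prime_of_mem_primeFactors hq
  rcases hr.dvd_mul.1 hrq with hpow | hsub
  · left
    have hexp : n.factorization q - 1 ≠ 0 := fun h ↦ hr.not_dvd_one (by rwa [h, pow_zero] at hpow)
    obtain rfl := (Nat.prime_dvd_prime_iff_eq hr hqp).1 (hr.dvd_of_dvd_pow hpow)
    exact (pow_dvd_pow r (by lia)).trans (Nat.ordProj_dvd n r)
  · right
    obtain ⟨k, hk⟩ := hsub
    have hq_eq : q = k * r + 1 := by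
      rw [mul_comm]
      have := hqp.one_le
      lia
    have hk₀ : 0 < k := Nat.pos_of_ne_zero fun h ↦ hqp.ne_one (by simp [hq_eq, h])
    have hrq_coprime : r.Coprime q := by simp [hq_eq]
    exact ⟨k, hk₀, hq_eq ▸
      hrq_coprime.mul_dvd_of_dvd_of_dvd hrn (Nat.dvd_of_mem_primeFactors hq)⟩

theorem card_Ioc_filter_dvd_le (N d : ℕ) : (#{n ∈ Ioc 0 N | d ∣ n} : ℝ) ≤ N / d := by
  rw [Nat.Ioc_filter_dvd_card_eq_div]
  exact Nat.cast_div_le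

theorem sum_Icc_inv_le_one_add_log (N : ℕ) : ∑ k ∈ Icc 1 N, (k : ℝ)⁻¹ ≤ 1 + log N := by
  have h := harmonic_le_one_add_log N
  rw [harmonic_eq_sum_Icc] at h
  push_cast at h
  exact h

theorem card_Ioc_filter_mul_mul_add_one_dvd_le {r k : ℕ} (hr : 0 < r) (hk : 0 < k) (N : ℕ) :
    (#{n ∈ Ioc 0 N | r * (k * r + 1) ∣ n} : ℝ) ≤ N * ((r : ℝ) ^ 2)⁻¹ * (k : ℝ)⁻¹ := by
  calc (#{n ∈ Ioc 0 N | r * (k * r + 1) ∣ n} : ℝ)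
      ≤ N / (r * (k * r + 1) : ℕ) := card_Ioc_filter_dvd_le _ _
    _ ≤ N / (r * (k * r) : ℕ) := by
      gcongr
      exact Nat.le_succ _
    _ = N * ((r : ℝ) ^ 2)⁻¹ * (k : ℝ)⁻¹ := by
      push_cast
      field_simp

open Classical in
theorem card_filter_isObstruction_le {r : ℕ} (hr : 0 < r) (N : ℕ) :
    (#{n ∈ Ioc 0 N | IsObstruction r n} : ℝ) ≤ N * (2 + log N) * ((r : ℝ) ^ 2)⁻¹ := by
  have cover : {n ∈ Ioc 0 N | IsObstruction r n} ⊆ {n ∈ Ioc 0 N | r ^ 2 ∣ n} ∪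
      (Icc 1 N).biUnion fun k ↦ {n ∈ Ioc 0 N | r * (k * r + 1) ∣ n} := by
    intro n hn
    simp only [mem_union, mem_biUnion, mem_filter, mem_Icc, mem_Ioc] at hn ⊢
    obtain ⟨hnN, hsq | ⟨k, hk, hdvd⟩⟩ := hn
    · exact .inl ⟨hnN, hsq⟩
    · have hkn : k ≤ r * (k * r + 1) := by nlinarith [Nat.mul_le_mul_left k hr]
      exact .inr ⟨k, ⟨hk, hkn.trans ((Nat.le_of_dvd hnN.1 hdvd).trans hnN.2)⟩, hnN, hdvd⟩
  have card_le : (#{n ∈ Ioc 0 N | IsObstruction r n} : ℝ) ≤ #{n ∈ Ioc 0 N | r ^ 2 ∣ n} +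
      ∑ k ∈ Icc 1 N, (#{n ∈ Ioc 0 N | r * (k * r + 1) ∣ n} : ℝ) := by
    exact_mod_cast (card_le_card cover).trans <| (card_union_le _ _).trans <| by
      gcongr
      exact card_biUnion_le
  calc (#{n ∈ Ioc 0 N | IsObstruction r n} : ℝ)
      ≤ N / (r ^ 2 : ℕ) + ∑ k ∈ Icc 1 N, N * ((r : ℝ) ^ 2)⁻¹ * (k : ℝ)⁻¹ :=
        card_le.trans <| add_le_add (card_Ioc_filter_dvd_le _ _) <| sum_le_sum fun _ hk ↦
          card_Ioc_filter_mul_mul_add_one_dvd_le hr (mem_Icc.1 hk).1 N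
    _ = N * ((r : ℝ) ^ 2)⁻¹ * (1 + ∑ k ∈ Icc 1 N, (k : ℝ)⁻¹) := by
        rw [← mul_sum]
        push_cast
        ring
    _ ≤ N * ((r : ℝ) ^ 2)⁻¹ * (1 + (1 + log N)) := by
        gcongr
        exact sum_Icc_inv_le_one_add_log N
    _ = N * (2 + log N) * ((r : ℝ) ^ 2)⁻¹ := by ring

theorem sum_Ioc_inv_sq_le_inv {k : ℕ} (hk : k ≠ 0) (n : ℕ) :
    ∑ i ∈ Ioc k n, ((i : ℝ) ^ 2)⁻¹ ≤ (k : ℝ)⁻¹ := by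
  rcases le_total k n with hkn | hkn
  · exact (sum_Ioc_inv_sq_le_sub hk hkn).trans (sub_le_self _ (by positivity))
  · simp [Ioc_eq_empty_of_le hkn]

theorem card_coprime_primorial_not_isCyclicNum_le {y : ℕ} (hy : y ≠ 0) (N : ℕ) :
    (#{n ∈ Ioc 0 N | (primorial y).Coprime n ∧ ¬ IsCyclicNum n} : ℝ) ≤ N * (2 + log N) / y := by
  classical
  have cover : {n ∈ Ioc 0 N | (primorial y).Coprime n ∧ ¬ IsCyclicNum n} ⊆
      (Ioc y N).biUnion fun r ↦ {n ∈ Ioc 0 N | IsObstruction r n} := by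
    intro n hn
    simp only [mem_biUnion, mem_filter, mem_Ioc] at hn ⊢
    obtain ⟨hnN, hrough, hcyc⟩ := hn
    obtain ⟨r, hr, hobs⟩ := exists_prime_isObstruction hnN.1 hcyc
    have hyr : y < r := not_le.1 fun hry ↦
      Nat.not_coprime_of_dvd_of_dvd hr.one_lt (hr.dvd_primorial_iff.2 hry) hobs.dvd hrough
    exact ⟨r, ⟨hyr, (Nat.le_of_dvd hnN.1 hobs.dvd).trans hnN.2⟩, hnN, hobs⟩
  calc (#{n ∈ Ioc 0 N | (primorial y).Coprime n ∧ ¬ IsCyclicNum n} : ℝ)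
      ≤ ∑ r ∈ Ioc y N, (#{n ∈ Ioc 0 N | IsObstruction r n} : ℝ) := by
        exact_mod_cast (card_le_card cover).trans card_biUnion_le
    _ ≤ ∑ r ∈ Ioc y N, N * (2 + log N) * ((r : ℝ) ^ 2)⁻¹ := sum_le_sum fun r hr ↦
        card_filter_isObstruction_le (Nat.zero_lt_of_lt (mem_Ioc.1 hr).1) N
    _ ≤ N * (2 + log N) * (y : ℝ)⁻¹ := by
        rw [← mul_sum]
        gcongr
        exact sum_Ioc_inv_sq_le_inv hy N

theorem exists_isCyclicNum_mem_Ico {z y a H : ℕ} (hy : y ≠ 0) (ha : 0 < a)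
    (h : ((a + H : ℕ) : ℝ) * (2 + log (a + H : ℕ)) / y <
      (H * (1 - primeInvSum z y) - primorial z * (1 + 2 * y)) * mertensProd z) :
    ∃ n ∈ Ico a (a + H), IsCyclicNum n := by
  by_contra! hnone
  have rough_subset : {n ∈ Ico a (a + H) | (primorial y).Coprime n} ⊆
      {n ∈ Ioc 0 (a + H) | (primorial y).Coprime n ∧ ¬ IsCyclicNum n} := by
    intro n hn
    obtain ⟨hmem, hrough⟩ := mem_filter.1 hn
    have := mem_Ico.1 hmem
    exact mem_filter.2 ⟨mem_Ioc.2 ⟨by lia, by lia⟩, hrough, hnone n hmem⟩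
  have card_le : (#{n ∈ Ico a (a + H) | (primorial y).Coprime n} : ℝ) ≤
      #{n ∈ Ioc 0 (a + H) | (primorial y).Coprime n ∧ ¬ IsCyclicNum n} := by
    exact_mod_cast card_le_card rough_subset
  exact h.not_ge <| (le_card_Ico_filter_coprime_primorial z y a H).trans <|
    card_le.trans (card_coprime_primorial_not_isCyclicNum_le hy (a + H))

end CyclicNumbers

section ShortIntervals

theorem two_add_log_le_of_lt_eight_pow {N M : ℕ} (hM : M ≠ 0) (hN : N < 8 ^ M) :
    2 + log N ≤ 5 * M := by
  have hM₁ : (1 : ℝ) ≤ M := by exact_mod_cast Nat.one_le_iff_ne_zero.2 hM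
  have log_eight : log 8 ≤ 3 := by
    rw [show (8 : ℝ) = 2 ^ 3 by norm_num, log_pow]
    push_cast
    linarith [log_two_lt_d9]
  have log_le : log N ≤ M * log 8 := by
    rcases N.eq_zero_or_pos with rfl | hpos
    · simp only [Nat.cast_zero, log_zero]
      positivity
    · rw [← log_pow]
      exact log_le_log (by positivity) (by exact_mod_cast hN.le)
  linarith [mul_le_mul_of_nonneg_left log_eight M.cast_nonneg]

theorem eventually_primorial_mul_le {ε : ℝ} (hε : 0 < ε) :
    ∀ᶠ z : ℕ in atTop, ∀ y ≤ z ^ 2, primorial z * (1 + 2 * y : ℝ) ≤ ε * 8 ^ z := by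
  have small : ∀ᶠ z : ℕ in atTop, (z : ℝ) ^ 2 / 2 ^ z < ε / 3 :=
    (tendsto_pow_const_div_const_pow_of_one_lt 2 one_lt_two).eventually_lt_const (by positivity)
  filter_upwards [small, eventually_ge_atTop 1] with z hsmall hz y hy
  have hy' : (y : ℝ) ≤ z ^ 2 := by exact_mod_cast hy
  have hz' : (1 : ℝ) ≤ z ^ 2 := one_le_pow₀ (by exact_mod_cast hz)
  rw [div_lt_iff₀ (by positivity)] at hsmall
  calc primorial z * (1 + 2 * y : ℝ) ≤ 4 ^ z * (3 * z ^ 2) := by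
        gcongr
        · exact_mod_cast primorial_le_four_pow z
        · linarith
    _ ≤ 4 ^ z * (3 * (ε / 3 * 2 ^ z)) := by gcongr
    _ = ε * 8 ^ z := by
        rw [show (8 : ℝ) = 4 * 2 by norm_num, mul_pow]
        ring

theorem exists_isCyclicNum_mem_Ico_of_two_add_log_lt {ε : ℝ} {z y a H : ℕ} (hy : y ≠ 0)
    (ha : 0 < a) (hH : ε * (a + H : ℕ) ≤ H) (hsum : primeInvSum z y ≤ 1 / 4)
    (hprimorial : primorial z * (1 + 2 * y) ≤ ε / 4 * (a + H : ℕ))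
    (hlog : 2 + log (a + H : ℕ) < ε / 2 * y * mertensProd z) :
    ∃ n ∈ Ico a (a + H), IsCyclicNum n := by
  refine exists_isCyclicNum_mem_Ico (z := z) hy ha ?_
  have hV : 0 < mertensProd z := mertensProd_pos z
  have main_term : ε * (a + H : ℕ) * (3 / 4) ≤ H * (1 - primeInvSum z y) :=
    mul_le_mul hH (by linarith) (by norm_num) H.cast_nonneg
  calc ((a + H : ℕ) : ℝ) * (2 + log (a + H : ℕ)) / y
      < (a + H : ℕ) * (ε / 2 * y * mertensProd z) / y := by gcongr
    _ = ε / 2 * (a + H : ℕ) * mertensProd z := by field_simp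
    _ ≤ (H * (1 - primeInvSum z y) - primorial z * (1 + 2 * y)) * mertensProd z := by
        gcongr
        linarith

-- Sieving up to `2 ^ (17 * k)` rather than `2 ^ (16 * k)` gains the factor `2 ^ k` that beats
-- `mertensProd`, at the price of a prime sum of only `4 * k / (16 * k) = 1 / 4`.
theorem eventually_exists_isCyclicNum_mem_Ico_of_scale {ε : ℝ} (hε : 0 < ε) :
    ∀ᶠ k : ℕ in atTop, ∀ a H : ℕ, 0 < a → 8 ^ 2 ^ (16 * k) ≤ a + H →
      a + H < 8 ^ 2 ^ (16 * (k + 1)) → ε * (a + H : ℕ) ≤ H →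
      ∃ n ∈ Ico a (a + H), IsCyclicNum n := by
  have scale_tendsto : Tendsto (fun k : ℕ ↦ 2 ^ (16 * k)) atTop atTop :=
    (tendsto_pow_atTop_atTop_of_one_lt one_lt_two).comp (tendsto_id.const_mul_atTop' (by norm_num))
  filter_upwards [eventually_ne_atTop 0,
    scale_tendsto.eventually (eventually_primorial_mul_le (show 0 < ε / 4 by positivity)),
    (tendsto_two_pow_mul_mertensProd (by norm_num : 16 ≠ 0)).eventually_gt_atTop
      (5 * 2 ^ 16 / (ε / 2))] with k hk hprimorial hmertens a H ha hle hlt hH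
  refine exists_isCyclicNum_mem_Ico_of_two_add_log_lt (z := 2 ^ (16 * k)) (y := 2 ^ (16 * k + k))
    (by positivity) ha hH ?_ ?_ ?_
  · refine (primeInvSum_two_pow_le (by lia) k).trans_eq ?_
    push_cast
    field_simp
    norm_num
  · refine (hprimorial _ ?_).trans (mul_le_mul_of_nonneg_left ?_ (by positivity))
    · rw [← pow_mul]
      exact pow_le_pow_right₀ one_le_two (by lia)
    · exact_mod_cast hle
  · rw [div_lt_iff₀ (by positivity)] at hmertens
    have hlog := two_add_log_le_of_lt_eight_pow (pow_ne_zero _ two_ne_zero) hlt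
    calc _ ≤ 5 * ((2 ^ (16 * (k + 1)) : ℕ) : ℝ) := hlog
      _ = 5 * 2 ^ 16 * 2 ^ (16 * k) := by
        push_cast
        ring
      _ < 2 ^ k * mertensProd (2 ^ (16 * k)) * (ε / 2) * 2 ^ (16 * k) :=
        mul_lt_mul_of_pos_right hmertens (by positivity)
      _ = ε / 2 * (2 ^ (16 * k + k) : ℕ) * mertensProd (2 ^ (16 * k)) := by
        push_cast
        ring

theorem eventually_exists_isCyclicNum_mem_Ico {ε : ℝ} (hε : 0 < ε) :
    ∀ᶠ N : ℕ in atTop, ∀ a H : ℕ, 0 < a → a + H = N → ε * N ≤ H →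
      ∃ n ∈ Ico a N, IsCyclicNum n := by
  have scale_tendsto : Tendsto (fun N ↦ Nat.log (2 ^ 16) (Nat.log 8 N)) atTop atTop := by
    refine tendsto_atTop.2 fun k ↦ ?_
    filter_upwards [eventually_ge_atTop (8 ^ (2 ^ 16) ^ k)] with N hN
    exact Nat.le_log_of_pow_le (by norm_num) (Nat.le_log_of_pow_le (by norm_num) hN)
  filter_upwards [scale_tendsto.eventually (eventually_exists_isCyclicNum_mem_Ico_of_scale hε),
    eventually_ge_atTop 8] with N hscale hN a H ha haH hH
  subst haH
  have hlog : Nat.log 8 (a + H) ≠ 0 := (Nat.log_pos (by norm_num) hN).ne'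
  refine hscale a H ha ?_ ?_ hH
  · rw [pow_mul]
    exact (pow_le_pow_right₀ (by norm_num) (Nat.pow_log_le_self _ hlog)).trans
      (Nat.pow_log_le_self 8 (by lia))
  · rw [pow_mul]
    exact (Nat.lt_pow_succ_log_self (by norm_num) _).trans_le
      (pow_le_pow_right₀ (by norm_num) (Nat.lt_pow_succ_log_self (by norm_num) _))

theorem eventually_exists_isCyclicNum_between {θ : ℝ} (hθ₀ : 0 < θ) (hθ₁ : θ < 1) :
    ∀ᶠ N : ℕ in atTop, ∃ n, IsCyclicNum n ∧ θ * N ≤ n ∧ n ≤ N := by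
  have hε : 0 < (1 - θ) / 2 := by linarith
  filter_upwards [eventually_exists_isCyclicNum_mem_Ico hε,
    (tendsto_natCast_atTop_atTop.const_mul_atTop hε).eventually_ge_atTop (1 : ℝ)]
    with N hcyc hlarge
  set H := ⌈(1 - θ) / 2 * N⌉₊
  have hH : (H : ℝ) < (1 - θ) / 2 * N + 1 := Nat.ceil_lt_add_one (by positivity)
  have hHN : θ * N ≤ N - H := by linarith
  have hlt : H < N := by
    rw [← Nat.cast_lt (α := ℝ)]
    nlinarith
  obtain ⟨n, hn, hn_cyc⟩ :=
    hcyc (N - H) H (Nat.sub_pos_of_lt hlt) (Nat.sub_add_cancel hlt.le) (Nat.le_ceil _)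
  rw [mem_Ico] at hn
  have hcast : ((N - H : ℕ) : ℝ) ≤ n := by exact_mod_cast hn.1
  rw [Nat.cast_sub hlt.le] at hcast
  exact ⟨n, hn_cyc, hHN.trans hcast, hn.2.le⟩

end ShortIntervals

section Enumeration

theorem infinite_setOf_isCyclicNum : (Set.ofPred IsCyclicNum).Infinite :=
  Nat.infinite_setOfPred_prime.mono fun _ ↦ isCyclicNum_of_prime

theorem cyclicCount_eq_count (x : ℝ) : cyclicCount x = Nat.count IsCyclicNum (⌊x⌋₊ + 1) :=
  (Nat.count_eq_card_filter_range _ _).symm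

theorem isGreatest_cyclicNum_cyclicCount {x : ℝ} (hx : 1 ≤ x) :
    IsGreatest {n | IsCyclicNum n ∧ (n : ℝ) ≤ x} (cyclicNum (cyclicCount x)) := by
  have hx₀ : 0 ≤ x := zero_le_one.trans hx
  have count_lt {n : ℕ} (hn : IsCyclicNum n) (hnx : n ≤ x) :
      Nat.count IsCyclicNum n < Nat.count IsCyclicNum (⌊x⌋₊ + 1) :=
    Nat.count_strict_mono hn (Nat.lt_succ_of_le (Nat.le_floor hnx))
  have count_pos : 0 < Nat.count IsCyclicNum (⌊x⌋₊ + 1) :=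
    Nat.zero_lt_of_lt (count_lt (n := 1) (by simp [IsCyclicNum]) (by simpa using hx))
  rw [cyclicCount_eq_count, cyclicNum]
  refine ⟨⟨Nat.nth_mem_of_infinite infinite_setOf_isCyclicNum _, ?_⟩, fun n hn ↦ ?_⟩
  · rw [← Nat.le_floor_iff hx₀]
    exact Nat.le_of_lt_succ (Nat.nth_lt_of_lt_count (Nat.sub_one_lt_of_lt count_pos))
  · obtain ⟨hcyc, hnx⟩ := hn
    rw [← Nat.nth_count hcyc]
    exact Nat.nth_monotone infinite_setOf_isCyclicNum (Nat.le_sub_one_of_lt (count_lt hcyc hnx))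

theorem tendsto_cyclicNum_cyclicCount_div_floor :
    Tendsto (fun x : ℝ ↦ (cyclicNum (cyclicCount x) : ℝ) / ⌊x⌋₊) atTop (nhds 1) := by
  refine tendsto_order.2 ⟨fun l hl ↦ ?_, fun u hu ↦ ?_⟩
  · obtain ⟨θ, hlθ, hθ⟩ := exists_between (max_lt hl one_pos)
    rw [max_lt_iff] at hlθ
    filter_upwards [eventually_ge_atTop 1, tendsto_nat_floor_atTop.eventually
      (eventually_exists_isCyclicNum_between hlθ.2 hθ)] with x hx ⟨n, hn, hθn, hnx⟩
    have hfloor : (0 : ℝ) < ⌊x⌋₊ := by exact_mod_cast Nat.floor_pos.2 hx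
    have hle : n ≤ cyclicNum (cyclicCount x) := (isGreatest_cyclicNum_cyclicCount hx).2
      ⟨hn, (Nat.cast_le.2 hnx).trans (Nat.floor_le (by linarith))⟩
    exact hlθ.1.trans_le ((le_div_iff₀ hfloor).2 (hθn.trans (Nat.cast_le.2 hle)))
  · filter_upwards [eventually_ge_atTop 1] with x hx
    have hle := (isGreatest_cyclicNum_cyclicCount hx).1.2
    refine (div_le_one_of_le₀ ?_ (Nat.cast_nonneg _)).trans_lt hu
    exact_mod_cast Nat.le_floor hle

end Enumeration

theorem div_cyclicNum_cyclicCount_tendsto_one :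
    Tendsto (fun x : ℝ => x / (cyclicNum (cyclicCount x) : ℝ)) atTop (nhds 1) := by
  have ratio : Tendsto (fun x : ℝ ↦ (cyclicNum (cyclicCount x) : ℝ) / x) atTop (nhds 1) := by
    have h := tendsto_cyclicNum_cyclicCount_div_floor.mul (tendsto_nat_floor_div_atTop (R := ℝ))
    rw [one_mul] at h
    refine h.congr' ?_
    filter_upwards [eventually_ge_atTop 1] with x hx
    have hfloor : (0 : ℝ) < ⌊x⌋₊ := by exact_mod_cast Nat.floor_pos.2 hx
    field_simp
  simpa only [inv_div, inv_one] using ratio.inv₀ one_ne_zero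
end

section
/- The analog for cyclic numbers of the second Hardy–Littlewood conjecture is false: there exist positive integers m ≤ n with C(m+n) > C(m) + C(n), where C(x) is the number of cyclic numbers ≤ x. Specifically, C(209) = 71, C(389) = 128, and C(598) = 200, so C(209 + 389) = 200 > 199 = C(209) + C(389). -/
open Filter Asymptotics Real

/-- The number of cyclic numbers less than or equal to the natural number `x`. -/
def cyclicCountNat (x : ℕ) : ℕ := ((Finset.range (x + 1)).filter IsCyclicNum).card

/-!
If `p ^ 2 ∣ n` for a prime `p`, then `p` divides both `n` and `φ n`, so cyclic numbers are
squarefree; and for squarefree `n`, `φ n = ∏ p ∣ n, (p - 1)`. Hence `n` is cyclic iff it is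
squarefree and coprime to `∏ p ∣ n, (p - 1)`. Trial division decides this criterion, whereas the
definition of `φ n` runs through all residues, so counting cyclic numbers up to `598` becomes a
light computation for the kernel.
-/

theorem squarefree_of_coprime_totient {n : ℕ} (h : n.Coprime n.totient) : Squarefree n := by
  refine Nat.squarefree_iff_prime_squarefree.mpr fun p hp hpp => ?_
  have p_dvd_totient : p ∣ n.totient :=
    calc p ∣ p * p.totient := dvd_mul_right p _
      _ = (p * p).totient := (Nat.totient_mul_of_prime_of_dvd hp dvd_rfl).symm
      _ ∣ n.totient := Nat.totient_dvd_of_dvd hpp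
  exact Nat.not_coprime_of_dvd_of_dvd hp.one_lt (dvd_of_mul_left_dvd hpp) p_dvd_totient h

theorem totient_eq_prod_primeFactors_of_squarefree {n : ℕ} (hn : Squarefree n) :
    n.totient = ∏ p ∈ n.primeFactors, (p - 1) := by
  have h := Nat.totient_mul_prod_primeFactors n
  rw [Nat.prod_primeFactors_of_squarefree hn, mul_comm] at h
  exact Nat.eq_of_mul_eq_mul_left hn.ne_zero.pos h

theorem isCyclicNum_iff_squarefree_and_coprime {n : ℕ} :
    IsCyclicNum n ↔ Squarefree n ∧ n.Coprime (∏ p ∈ n.primeFactors, (p - 1)) := by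
  constructor
  · rintro ⟨-, hcop⟩
    have hn := squarefree_of_coprime_totient hcop
    exact ⟨hn, totient_eq_prod_primeFactors_of_squarefree hn ▸ hcop⟩
  · rintro ⟨hn, hcop⟩
    exact ⟨hn.ne_zero.pos, totient_eq_prod_primeFactors_of_squarefree hn ▸ hcop⟩

theorem cyclicCountNat_eq_count (x : ℕ) :
    cyclicCountNat x =
      Nat.count (fun n => Squarefree n ∧ n.Coprime (∏ p ∈ n.primeFactors, (p - 1))) (x + 1) := by
  simp only [cyclicCountNat, Nat.count_eq_card_filter_range, isCyclicNum_iff_squarefree_and_coprime]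

theorem cyclicCountNat_209 : cyclicCountNat 209 = 71 := by
  rw [cyclicCountNat_eq_count]
  decide +kernel

theorem cyclicCountNat_389 : cyclicCountNat 389 = 128 := by
  rw [cyclicCountNat_eq_count]
  decide +kernel

theorem cyclicCountNat_598 : cyclicCountNat 598 = 200 := by
  rw [cyclicCountNat_eq_count]
  decide +kernel

theorem hardy_littlewood_analog_for_cyclics_false :
    (∃ m n : ℕ, 0 < m ∧ m ≤ n ∧
      cyclicCountNat m + cyclicCountNat n < cyclicCountNat (m + n)) ∧
    cyclicCountNat 209 = 71 ∧ cyclicCountNat 389 = 128 ∧ cyclicCountNat 598 = 200 ∧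
    cyclicCountNat 209 + cyclicCountNat 389 < cyclicCountNat (209 + 389) := by
  have counterexample :
      cyclicCountNat 209 + cyclicCountNat 389 < cyclicCountNat (209 + 389) := by
    rw [cyclicCountNat_209, cyclicCountNat_389, cyclicCountNat_598]
    norm_num
  exact ⟨⟨209, 389, by norm_num, by norm_num, counterexample⟩,
    cyclicCountNat_209, cyclicCountNat_389, cyclicCountNat_598, counterexample⟩
end

section
/- Every sufficiently large even positive integer is the sum of two cyclic numbers. -/
open Filter Asymptotics Real

/-!
Let `P` be the product of the primes up to `z`, with `z` a small multiple of `log n`. Since `n` is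
even, some residues `x` modulo `P` have both `x` and `n - x` invertible; let `A` be the set of
`a < n` in these classes. We show that fewer than half of the elements of `A` are noncyclic, so by
reflection `a ↦ n - a` some `a ∈ A` has both `a` and `n - a` cyclic.

A noncyclic `a ∈ A` is divisible by `q ^ 2`, or by `q * (j * q + 1)` with `j ≥ 1`, for some prime
`q > z`. The proportion of `A` in a residue class modulo `d` coprime to `P` is about `1 / d`, so
these events have total proportion `O((∑ 1 / q ^ 2) * log n)`. As the primes have density zero, the
sum over `q > z` is `o(1 / z)`, which beats `log n = O(z)`. When `q * (j * q + 1)` is too large for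
counting its multiples, the cofactor `b` in `a = b * (q * (j * q + 1))` is at most `P`, and
`a ≡ b * q` modulo `b * q ^ 2` is counted instead.
-/

open Finset

lemma sq_dvd_or_dvd_pred_of_dvd_totient {a q : ℕ} (hq : q.Prime) (hqa : q ∣ a.totient) :
    q ^ 2 ∣ a ∨ ∃ p, p.Prime ∧ p ∣ a ∧ q ∣ p - 1 := by
  rcases eq_or_ne a 0 with rfl | ha
  · exact .inl (dvd_zero _)
  rw [Nat.totient_eq_prod_factorization ha, hq.prime.dvd_finsuppProd_iff] at hqa
  obtain ⟨p, hp_mem, hqp⟩ := hqa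
  have hp : p.Prime := Nat.prime_of_mem_primeFactors hp_mem
  rcases hq.dvd_mul.1 hqp with hq_pow | hq_pred
  · obtain rfl : q = p := (Nat.prime_dvd_prime_iff_eq hq hp).1 (hq.dvd_of_dvd_pow hq_pow)
    have hexp : a.factorization q - 1 ≠ 0 := fun h ↦
      hq.not_dvd_one (by simpa only [h, pow_zero] using hq_pow)
    exact .inl ((hq.pow_dvd_iff_le_factorization ha).2 (by lia))
  · exact .inr ⟨p, hp, Nat.dvd_of_mem_primeFactors hp_mem, hq_pred⟩

lemma exists_sq_dvd_or_mul_succ_dvd_of_not_isCyclicNum {a : ℕ} (ha : a ≠ 0)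
    (hcyc : ¬ IsCyclicNum a) :
    ∃ q, q.Prime ∧ (q ^ 2 ∣ a ∨ ∃ j, j ≠ 0 ∧ q * (j * q + 1) ∣ a) := by
  have hgcd : a.gcd a.totient ≠ 1 := fun h ↦ hcyc ⟨ha.pos, h⟩
  obtain ⟨q, hq, hq_dvd⟩ := Nat.exists_prime_and_dvd hgcd
  obtain ⟨hqa, hq_totient⟩ := Nat.dvd_gcd_iff.1 hq_dvd
  refine ⟨q, hq, (sq_dvd_or_dvd_pred_of_dvd_totient hq hq_totient).imp_right ?_⟩
  rintro ⟨p, hp, hpa, j, hj⟩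
  have hp_eq : p = j * q + 1 := by
    rw [mul_comm j q, ← hj, Nat.sub_add_cancel hp.one_le]
  have hj0 : j ≠ 0 := by
    rintro rfl
    exact hp.ne_one (by simpa using hp_eq)
  have hne : q ≠ p := by
    have : q ≤ j * q := Nat.le_mul_of_pos_left q hj0.pos
    lia
  exact ⟨j, hj0, hp_eq ▸ ((Nat.coprime_primes hq hp).2 hne).mul_dvd_of_dvd_of_dvd hqa hpa⟩

section PrimeReciprocalSquares

lemma eventually_primeCounting_le_mul {δ : ℝ} (hδ : 0 < δ) :
    ∀ᶠ n : ℕ in atTop, (n.primeCounting : ℝ) ≤ δ * n := by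
  have hlog : ∀ᶠ x : ℝ in atTop, (log 4 + 1) / δ ≤ log x :=
    tendsto_log_atTop.eventually_ge_atTop _
  have hreal : ∀ᶠ x : ℝ in atTop, (⌊x⌋₊.primeCounting : ℝ) ≤ δ * x := by
    filter_upwards [Chebyshev.eventually_primeCounting_le one_pos, hlog, eventually_gt_atTop 1]
      with x hx hlogx hx1
    refine hx.trans ?_
    rw [div_le_iff₀ hδ] at hlogx
    rw [div_le_iff₀ (log_pos hx1)]
    calc (log 4 + 1) * x ≤ (log x * δ) * x := by gcongr
      _ = δ * x * log x := by ring
  filter_upwards [tendsto_natCast_atTop_atTop.eventually hreal] with n hn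
  simpa only [Nat.floor_natCast] using hn

lemma div_sq_sub_two_mul_div_le {A δ n : ℝ} (hn : 0 < n) (hδ : 0 ≤ δ) (hA : A ≤ δ * n) :
    A / n ^ 2 - 2 * δ / n ≤ A / (n + 1) ^ 2 - 2 * δ / (n + 1) := by
  rw [← sub_nonneg]
  have hgap : A / (n + 1) ^ 2 - 2 * δ / (n + 1) - (A / n ^ 2 - 2 * δ / n) =
      ((δ * n - A) * (2 * n + 1) + δ * n) / (n ^ 2 * (n + 1) ^ 2) := by
    field_simp
    ring
  rw [hgap]
  have := sub_nonneg.2 hA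
  positivity

variable {p : ℕ → Prop} [DecidablePred p] {δ : ℝ} {z : ℕ}

lemma nonneg_of_count_le_mul (hz : 0 < z) (hcount : (Nat.count p (z + 1) : ℝ) ≤ δ * z) : 0 ≤ δ :=
  nonneg_of_mul_nonneg_left ((Nat.cast_nonneg _).trans hcount) (Nat.cast_pos.2 hz)

/-- Partial summation as an induction on `M`: the boundary term `count p (M + 1) / M ^ 2` absorbs
each new summand. -/
lemma sum_inv_sq_le_count_div_sq_add (hz : 0 < z)
    (hcount : ∀ n, z ≤ n → (Nat.count p (n + 1) : ℝ) ≤ δ * n) {M : ℕ} (hM : z ≤ M) :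
    ∑ q ∈ Ioc z M with p q, ((q : ℝ) ^ 2)⁻¹ ≤
      Nat.count p (M + 1) / (M : ℝ) ^ 2 - 2 * δ / M + 2 * δ / z := by
  have hδ : 0 ≤ δ := nonneg_of_count_le_mul hz (hcount z le_rfl)
  rw [sum_filter]
  induction M, hM using Nat.le_induction with
  | base =>
    rw [Ioc_self, sum_empty, sub_add_cancel]
    positivity
  | succ n hn ih =>
    have hstep := div_sq_sub_two_mul_div_le (Nat.cast_pos.2 (hz.trans_le hn)) hδ (hcount n hn)
    rw [sum_Ioc_succ_top hn, Nat.count_succ]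
    push_cast
    rw [add_div]
    split_ifs <;> simp <;> linarith

lemma sum_inv_sq_le_of_count_le (hz : 0 < z)
    (hcount : ∀ n, z ≤ n → (Nat.count p (n + 1) : ℝ) ≤ δ * n) (M : ℕ) :
    ∑ q ∈ Ioc z M with p q, ((q : ℝ) ^ 2)⁻¹ ≤ 2 * δ / z := by
  have hδ : 0 ≤ δ := nonneg_of_count_le_mul hz (hcount z le_rfl)
  rcases lt_or_ge M z with hM | hM
  · rw [Ioc_eq_empty hM.not_gt, filter_empty, sum_empty]
    positivity
  have hM0 : (0 : ℝ) < M := Nat.cast_pos.2 (hz.trans_le hM)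
  have hboundary : Nat.count p (M + 1) / (M : ℝ) ^ 2 ≤ 2 * δ / M := by
    rw [div_le_div_iff₀ (by positivity) hM0]
    nlinarith [hcount M hM, mul_nonneg hδ hM0.le]
  linarith [sum_inv_sq_le_count_div_sq_add hz hcount hM]

lemma eventually_sum_prime_inv_sq_le {ε : ℝ} (hε : 0 < ε) :
    ∀ᶠ z : ℕ in atTop, ∀ M : ℕ, ∑ q ∈ Ioc z M with q.Prime, ((q : ℝ) ^ 2)⁻¹ ≤ ε / z := by
  filter_upwards [eventually_forall_ge_atTop.2 (eventually_primeCounting_le_mul (half_pos hε)),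
    eventually_gt_atTop 0] with z hcount hz M
  calc ∑ q ∈ Ioc z M with q.Prime, ((q : ℝ) ^ 2)⁻¹ ≤ 2 * (ε / 2) / z :=
        sum_inv_sq_le_of_count_le hz hcount M
    _ = ε / z := by rw [mul_div_cancel₀ ε two_ne_zero]

end PrimeReciprocalSquares

section SiftedSet

variable {P : ℕ}

/-- The sifted set of the sieve: the natural numbers below `N` whose residue modulo `P` belongs to
the prescribed set `S`. -/
def sifted (S : Finset (ZMod P)) (N : ℕ) : Finset ℕ := {a ∈ range N | (a : ZMod P) ∈ S}

lemma mem_sifted {S : Finset (ZMod P)} {N a : ℕ} : a ∈ sifted S N ↔ a < N ∧ (a : ZMod P) ∈ S := by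
  rw [sifted, mem_filter, mem_range]

variable [NeZero P]

lemma natCast_eq_iff_modEq_val {a : ℕ} {x : ZMod P} : (a : ZMod P) = x ↔ a ≡ x.val [MOD P] := by
  rw [← ZMod.natCast_eq_natCast_iff, ZMod.natCast_zmod_val]

lemma div_mul_card_le_card_sifted (S : Finset (ZMod P)) (N : ℕ) :
    N / P * #S ≤ #(sifted S N) := by
  refine mul_card_image_le_card_of_maps_to (f := fun a : ℕ ↦ (a : ZMod P))
    (fun a ha ↦ (mem_sifted.1 ha).2) _ fun x hx ↦ ?_
  calc N / P ≤ Nat.count (· ≡ x.val [MOD P]) N := by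
        rw [Nat.count_modEq_card N (NeZero.pos P)]
        exact Nat.le_add_right _ _
    _ = #{a ∈ range N | a ≡ x.val [MOD P]} := Nat.count_eq_card_filter_range _ _
    _ ≤ #{a ∈ sifted S N | (Nat.cast a : ZMod P) = x} := card_le_card fun a ha ↦ by
        rw [mem_filter, mem_range, ← natCast_eq_iff_modEq_val] at ha
        exact mem_filter.2 ⟨mem_sifted.2 ⟨ha.1, ha.2 ▸ hx⟩, ha.2⟩

/-- By the Chinese remainder theorem, every residue in `S` leaves a single class modulo `P * d`. -/
lemma card_sifted_modEq_le (S : Finset (ZMod P)) (N c : ℕ) {d : ℕ} (hd : 0 < d)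
    (hdP : d.Coprime P) :
    #{a ∈ sifted S N | a ≡ c [MOD d]} ≤ (N / (P * d) + 1) * #S := by
  refine card_le_mul_card_image_of_maps_to (f := fun a : ℕ ↦ (a : ZMod P))
    (fun a ha ↦ (mem_sifted.1 (mem_filter.1 ha).1).2) _ fun x _ ↦ ?_
  obtain ⟨v, hvP, hvd⟩ := Nat.chineseRemainder hdP.symm x.val c
  calc #{a ∈ {a ∈ sifted S N | a ≡ c [MOD d]} | (Nat.cast a : ZMod P) = x}
      ≤ #{a ∈ range N | a ≡ v [MOD P * d]} := card_le_card fun a ha ↦ by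
        simp only [mem_filter, mem_sifted, natCast_eq_iff_modEq_val] at ha
        obtain ⟨⟨⟨haN, -⟩, had⟩, haP⟩ := ha
        exact mem_filter.2 ⟨mem_range.2 haN, (Nat.modEq_and_modEq_iff_modEq_mul hdP.symm).1
          ⟨haP.trans hvP.symm, had.trans hvd.symm⟩⟩
    _ = Nat.count (· ≡ v [MOD P * d]) N := (Nat.count_eq_card_filter_range _ _).symm
    _ ≤ N / (P * d) + 1 := by
        rw [Nat.count_modEq_card N (Nat.mul_pos (NeZero.pos P) hd)]
        split_ifs <;> lia

lemma card_sifted_exists_modEq_le {ι : Type*} (S : Finset (ZMod P)) (N : ℕ) (I : Finset ι)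
    (c d : ι → ℕ) (hd : ∀ i ∈ I, 0 < d i ∧ (d i).Coprime P) :
    (#{a ∈ sifted S N | ∃ i ∈ I, a ≡ c i [MOD d i]} : ℝ) ≤
      #S * (N / P * ∑ i ∈ I, (d i : ℝ)⁻¹ + #I) := by
  have hunion : {a ∈ sifted S N | ∃ i ∈ I, a ≡ c i [MOD d i]} =
      I.biUnion fun i ↦ {a ∈ sifted S N | a ≡ c i [MOD d i]} := by
    ext a
    simp only [mem_filter, mem_biUnion]
    tauto
  have hterm : ∀ i ∈ I, (#{a ∈ sifted S N | a ≡ c i [MOD d i]} : ℝ) ≤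
      #S * (N / P * (d i : ℝ)⁻¹ + 1) := fun i hi ↦
    calc (#{a ∈ sifted S N | a ≡ c i [MOD d i]} : ℝ)
        ≤ ((N / (P * d i) : ℕ) + 1) * #S := by
          exact_mod_cast card_sifted_modEq_le S N (c i) (hd i hi).1 (hd i hi).2
      _ ≤ ((N : ℝ) / (P * d i : ℕ) + 1) * #S := by gcongr; exact Nat.cast_div_le
      _ = #S * (N / P * (d i : ℝ)⁻¹ + 1) := by push_cast; ring
  calc (#{a ∈ sifted S N | ∃ i ∈ I, a ≡ c i [MOD d i]} : ℝ)
      ≤ ∑ i ∈ I, (#{a ∈ sifted S N | a ≡ c i [MOD d i]} : ℝ) := by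
        rw [hunion]
        exact_mod_cast card_biUnion_le
    _ ≤ ∑ i ∈ I, #S * (N / P * (d i : ℝ)⁻¹ + 1) := sum_le_sum hterm
    _ = #S * (N / P * ∑ i ∈ I, (d i : ℝ)⁻¹ + #I) := by
        rw [← mul_sum, sum_add_distrib, ← mul_sum, sum_const, nsmul_one]

end SiftedSet

section NoncyclicCount

/-- The primes up to `s` that do not divide the sieving modulus `P`; these are the primes that can
still divide a number coprime to `P`. -/
def unsievedPrimes (P s : ℕ) : Finset ℕ := {q ∈ s.primesLE | q.Coprime P}

/-- The sum of `1 / q ^ 2` over the primes `q ≤ s` not dividing `P`, which governs the density of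
the noncyclic numbers among the numbers coprime to `P`. -/
noncomputable def unsievedInvSqSum (P s : ℕ) : ℝ := ∑ q ∈ unsievedPrimes P s, ((q : ℝ) ^ 2)⁻¹

/-- The pairs `(q, j)` for which the divisor `d = q * (j * q + 1)` is coprime to `P` and satisfies
`P * d ≤ N`, so that the rounding error `1` in counting a class modulo `P * d` below `N` is at most
the main term `N / (P * d)`. -/
def smallDivisorPairs (P N : ℕ) : Finset (ℕ × ℕ) :=
  {x ∈ unsievedPrimes P N.sqrt ×ˢ Icc 1 N |
    (x.1 * (x.2 * x.1 + 1)).Coprime P ∧ P * (x.1 * (x.2 * x.1 + 1)) ≤ N}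

/-- The pairs `(q, b)` with `b ≤ P` coprime to `P`. Here `b` is the cofactor in
`a = b * (q * (j * q + 1))`, so that `a ≡ b * q [MOD b * q ^ 2]` whatever `j` is. -/
def smallCofactorPairs (P N : ℕ) : Finset (ℕ × ℕ) :=
  {x ∈ unsievedPrimes P N.sqrt ×ˢ Icc 1 P | x.2.Coprime P}

lemma mem_unsievedPrimes {P s q : ℕ} :
    q ∈ unsievedPrimes P s ↔ q ≤ s ∧ q.Prime ∧ q.Coprime P := by
  rw [unsievedPrimes, mem_filter, Nat.mem_primesLE, and_assoc]

lemma mem_smallDivisorPairs {P N q j : ℕ} :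
    (q, j) ∈ smallDivisorPairs P N ↔ (q ∈ unsievedPrimes P N.sqrt ∧ 1 ≤ j ∧ j ≤ N) ∧
      (q * (j * q + 1)).Coprime P ∧ P * (q * (j * q + 1)) ≤ N := by
  rw [smallDivisorPairs, mem_filter, mem_product, mem_Icc]

lemma pos_of_mem_smallDivisorPairs {P N : ℕ} {x : ℕ × ℕ} (hx : x ∈ smallDivisorPairs P N) :
    0 < x.1 * (x.2 * x.1 + 1) :=
  Nat.mul_pos (mem_unsievedPrimes.1 (mem_smallDivisorPairs.1 hx).1.1).2.1.pos (Nat.succ_pos _)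

lemma mem_smallCofactorPairs {P N q b : ℕ} :
    (q, b) ∈ smallCofactorPairs P N ↔
      (q ∈ unsievedPrimes P N.sqrt ∧ 1 ≤ b ∧ b ≤ P) ∧ b.Coprime P := by
  rw [smallCofactorPairs, mem_filter, mem_product, mem_Icc]

lemma card_unsievedPrimes_le (P s : ℕ) : #(unsievedPrimes P s) ≤ s := by
  calc #(unsievedPrimes P s) ≤ #(Icc 1 s) := card_le_card fun q hq ↦ by
        obtain ⟨hqs, hq, -⟩ := mem_unsievedPrimes.1 hq
        exact mem_Icc.2 ⟨hq.one_le, hqs⟩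
    _ = s := by rw [Nat.card_Icc, Nat.add_sub_cancel]

lemma unsievedInvSqSum_nonneg (P s : ℕ) : 0 ≤ unsievedInvSqSum P s :=
  sum_nonneg fun _ _ ↦ by positivity

lemma unsievedInvSqSum_primorial (z s : ℕ) :
    unsievedInvSqSum (primorial z) s = ∑ q ∈ Ioc z s with q.Prime, ((q : ℝ) ^ 2)⁻¹ := by
  refine sum_congr (Finset.ext fun q ↦ ?_) fun _ _ ↦ rfl
  rw [mem_unsievedPrimes, mem_filter, mem_Ioc]
  constructor
  · rintro ⟨hqs, hq, hcop⟩
    rw [hq.coprime_iff_not_dvd, hq.dvd_primorial_iff, not_le] at hcop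
    exact ⟨⟨hcop, hqs⟩, hq⟩
  · rintro ⟨⟨hzq, hqs⟩, hq⟩
    rw [hq.coprime_iff_not_dvd, hq.dvd_primorial_iff, not_le]
    exact ⟨hqs, hq, hzq⟩

lemma sum_unsievedPrimes_product_Icc (P s n : ℕ) :
    ∑ x ∈ unsievedPrimes P s ×ˢ Icc 1 n, ((x.1 : ℝ) ^ 2)⁻¹ * (x.2 : ℝ)⁻¹ =
      unsievedInvSqSum P s * harmonic n := by
  rw [unsievedInvSqSum, harmonic_eq_sum_Icc, Rat.cast_sum, sum_mul_sum, sum_product]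
  simp only [Rat.cast_inv, Rat.cast_natCast]

lemma monotone_harmonic : Monotone harmonic := fun m n hmn ↦
  sum_le_sum_of_subset_of_nonneg (range_mono hmn) fun _ _ _ ↦ by positivity

lemma dvd_or_dvd_or_modEq_of_not_isCyclicNum {P N a : ℕ} (ha0 : a ≠ 0) (haN : a < N)
    (haP : a.Coprime P) (hcyc : ¬ IsCyclicNum a) :
    (∃ q ∈ unsievedPrimes P N.sqrt, q ^ 2 ∣ a) ∨
      (∃ x ∈ smallDivisorPairs P N, x.1 * (x.2 * x.1 + 1) ∣ a) ∨
      ∃ x ∈ smallCofactorPairs P N, a ≡ x.2 * x.1 [MOD x.2 * x.1 ^ 2] := by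
  have hunsieved : ∀ q : ℕ, q.Prime → q ∣ a → q ^ 2 ≤ a → q ∈ unsievedPrimes P N.sqrt :=
    fun q hq hqa hle ↦ mem_unsievedPrimes.2
      ⟨Nat.le_sqrt'.2 (hle.trans haN.le), hq, haP.coprime_dvd_left hqa⟩
  obtain ⟨q, hq, hsq | ⟨j, hj, hdvd⟩⟩ := exists_sq_dvd_or_mul_succ_dvd_of_not_isCyclicNum ha0 hcyc
  · exact .inl ⟨q, hunsieved q hq ((dvd_pow_self q two_ne_zero).trans hsq)
      (Nat.le_of_dvd ha0.pos hsq), hsq⟩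
  have hd_le : q * (j * q + 1) ≤ a := Nat.le_of_dvd ha0.pos hdvd
  have hjq : j * q ^ 2 ≤ a := by nlinarith
  have hq_mem : q ∈ unsievedPrimes P N.sqrt :=
    hunsieved q hq ((dvd_mul_right q _).trans hdvd) ((Nat.le_mul_of_pos_left _ hj.pos).trans hjq)
  obtain ⟨b, hb⟩ := hdvd
  have hb0 : b ≠ 0 := by
    rintro rfl
    exact ha0 hb
  right
  rcases le_or_gt b P with hbP | hPb
  · have hmod : a ≡ b * q [MOD b * q ^ 2] := by
      rw [hb, show q * (j * q + 1) * b = b * q + b * q ^ 2 * j by ring]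
      simp
    exact .inr ⟨(q, b), mem_smallCofactorPairs.2
      ⟨⟨hq_mem, hb0.pos, hbP⟩, haP.coprime_dvd_left (hb ▸ dvd_mul_left b _)⟩, hmod⟩
  · have hj_le : j ≤ N := by nlinarith [pow_pos hq.pos 2]
    have hsmall : P * (q * (j * q + 1)) ≤ N := by nlinarith
    exact .inl ⟨(q, j), mem_smallDivisorPairs.2
      ⟨⟨hq_mem, hj.pos, hj_le⟩, haP.coprime_dvd_left (hb ▸ dvd_mul_right _ b), hsmall⟩,
      hb ▸ dvd_mul_right _ b⟩

variable {P : ℕ} [NeZero P] (S : Finset (ZMod P)) (N : ℕ)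

lemma card_sifted_exists_sq_dvd_le :
    (#{a ∈ sifted S N | ∃ q ∈ unsievedPrimes P N.sqrt, q ^ 2 ∣ a} : ℝ) ≤
      #S * (N / P * unsievedInvSqSum P N.sqrt + N.sqrt) := by
  simp only [← Nat.modEq_zero_iff_dvd]
  refine (card_sifted_exists_modEq_le S N (unsievedPrimes P N.sqrt) (fun _ ↦ 0) (· ^ 2)
    fun q hq ↦ ?_).trans ?_
  · obtain ⟨-, hq, hqP⟩ := mem_unsievedPrimes.1 hq
    exact ⟨pow_pos hq.pos 2, hqP.pow_left 2⟩
  · simp only [Nat.cast_pow]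
    rw [← unsievedInvSqSum]
    gcongr
    exact card_unsievedPrimes_le P _

lemma sum_smallDivisorPairs_inv_le (P N : ℕ) :
    ∑ x ∈ smallDivisorPairs P N, ((x.1 * (x.2 * x.1 + 1) : ℕ) : ℝ)⁻¹ ≤
      unsievedInvSqSum P N.sqrt * harmonic N := by
  rw [← sum_unsievedPrimes_product_Icc]
  refine (sum_le_sum ?_).trans
    (sum_le_sum_of_subset_of_nonneg (filter_subset _ _) fun _ _ _ ↦ by positivity)
  rintro ⟨q, j⟩ hx
  obtain ⟨⟨hq, hj, -⟩, -⟩ := mem_smallDivisorPairs.1 hx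
  have hq0 : (0 : ℝ) < q := Nat.cast_pos.2 (mem_unsievedPrimes.1 hq).2.1.pos
  have : (0 : ℝ) < j := Nat.cast_pos.2 hj
  rw [← mul_inv]
  push_cast
  exact inv_anti₀ (by positivity) (by linarith)

variable (P) in
lemma card_smallDivisorPairs_le :
    (#(smallDivisorPairs P N) : ℝ) ≤
      N / P * ∑ x ∈ smallDivisorPairs P N, ((x.1 * (x.2 * x.1 + 1) : ℕ) : ℝ)⁻¹ := by
  have hP : (0 : ℝ) < P := Nat.cast_pos.2 (NeZero.pos P)
  rw [mul_sum, card_eq_sum_ones, Nat.cast_sum]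
  refine sum_le_sum fun x hx ↦ ?_
  have hx0 : (0 : ℝ) < (x.1 * (x.2 * x.1 + 1) : ℕ) :=
    Nat.cast_pos.2 (pos_of_mem_smallDivisorPairs hx)
  rw [Nat.cast_one, ← div_eq_mul_inv, div_div, one_le_div (by positivity)]
  exact_mod_cast (mem_smallDivisorPairs.1 hx).2.2

lemma card_sifted_exists_smallDivisorPairs_dvd_le :
    (#{a ∈ sifted S N | ∃ x ∈ smallDivisorPairs P N, x.1 * (x.2 * x.1 + 1) ∣ a} : ℝ) ≤
      #S * (2 * (N / P * (unsievedInvSqSum P N.sqrt * harmonic N))) := by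
  have hsum : (N / P * ∑ x ∈ smallDivisorPairs P N, ((x.1 * (x.2 * x.1 + 1) : ℕ) : ℝ)⁻¹ : ℝ) ≤
      N / P * (unsievedInvSqSum P N.sqrt * harmonic N) := by
    gcongr
    exact sum_smallDivisorPairs_inv_le P N
  simp only [← Nat.modEq_zero_iff_dvd]
  refine (card_sifted_exists_modEq_le S N (smallDivisorPairs P N) (fun _ ↦ 0)
    (fun x ↦ x.1 * (x.2 * x.1 + 1)) fun x hx ↦
      ⟨pos_of_mem_smallDivisorPairs hx, (mem_smallDivisorPairs.1 hx).2.1⟩).trans ?_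
  rw [two_mul]
  gcongr
  exact (card_smallDivisorPairs_le P N).trans hsum

lemma card_smallCofactorPairs_le (P N : ℕ) : #(smallCofactorPairs P N) ≤ N.sqrt * P := by
  refine (card_filter_le _ _).trans ?_
  rw [card_product, Nat.card_Icc, Nat.add_sub_cancel]
  gcongr
  exact card_unsievedPrimes_le P _

lemma sum_smallCofactorPairs_inv_le (P N : ℕ) :
    ∑ x ∈ smallCofactorPairs P N, ((x.2 * x.1 ^ 2 : ℕ) : ℝ)⁻¹ ≤
      unsievedInvSqSum P N.sqrt * harmonic P := by
  rw [← sum_unsievedPrimes_product_Icc]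
  simp only [Nat.cast_mul, Nat.cast_pow, mul_inv, mul_comm ((_ : ℝ) ^ 2)⁻¹]
  exact sum_le_sum_of_subset_of_nonneg (filter_subset _ _) fun _ _ _ ↦ by positivity

lemma card_sifted_exists_smallCofactorPairs_modEq_le :
    (#{a ∈ sifted S N | ∃ x ∈ smallCofactorPairs P N, a ≡ x.2 * x.1 [MOD x.2 * x.1 ^ 2]} : ℝ) ≤
      #S * (N / P * (unsievedInvSqSum P N.sqrt * harmonic P) + N.sqrt * P) := by
  refine (card_sifted_exists_modEq_le S N (smallCofactorPairs P N) (fun x ↦ x.2 * x.1)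
    (fun x ↦ x.2 * x.1 ^ 2) fun x hx ↦ ?_).trans ?_
  · obtain ⟨⟨hq, hb, -⟩, hbP⟩ := mem_smallCofactorPairs.1 hx
    obtain ⟨-, hq, hqP⟩ := mem_unsievedPrimes.1 hq
    exact ⟨Nat.mul_pos hb (pow_pos hq.pos 2), hbP.mul_left (hqP.pow_left 2)⟩
  · gcongr
    · exact sum_smallCofactorPairs_inv_le P N
    · exact_mod_cast card_smallCofactorPairs_le P N

variable {S N}

lemma card_sifted_not_isCyclicNum_le (hS : ∀ x ∈ S, IsUnit x) (hP : 1 < P) (hPN : P ≤ N) :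
    (#{a ∈ sifted S N | ¬ IsCyclicNum a} : ℝ) ≤
      #S * (N / P * (unsievedInvSqSum P N.sqrt * (1 + 3 * harmonic N)) + (P + 1) * N.sqrt) := by
  have hcover : {a ∈ sifted S N | ¬ IsCyclicNum a} ⊆
      {a ∈ sifted S N | ∃ q ∈ unsievedPrimes P N.sqrt, q ^ 2 ∣ a} ∪
      ({a ∈ sifted S N | ∃ x ∈ smallDivisorPairs P N, x.1 * (x.2 * x.1 + 1) ∣ a} ∪
      {a ∈ sifted S N | ∃ x ∈ smallCofactorPairs P N,
        a ≡ x.2 * x.1 [MOD x.2 * x.1 ^ 2]}) := by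
    simp only [← filter_or]
    refine fun a ha ↦ mem_filter.2 ?_
    obtain ⟨ha, hcyc⟩ := mem_filter.1 ha
    obtain ⟨haN, haS⟩ := mem_sifted.1 ha
    have haP : a.Coprime P := (ZMod.isUnit_iff_coprime a P).1 (hS _ haS)
    have ha0 : a ≠ 0 := by
      rintro rfl
      exact hP.ne' ((Nat.coprime_zero_left P).1 haP)
    exact ⟨ha, dvd_or_dvd_or_modEq_of_not_isCyclicNum ha0 haN haP hcyc⟩
  have hcard : (#{a ∈ sifted S N | ¬ IsCyclicNum a} : ℝ) ≤ _ :=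
    (Nat.cast_le.2 ((card_le_card hcover).trans ((card_union_le _ _).trans
      (Nat.add_le_add_left (card_union_le _ _) _)))) 
  push_cast at hcard
  have hharmonic : (harmonic P : ℝ) ≤ harmonic N := Rat.cast_le.2 (monotone_harmonic hPN)
  have hcofactor :
      (#S * (N / P * (unsievedInvSqSum P N.sqrt * harmonic P) + N.sqrt * P) : ℝ) ≤
      #S * (N / P * (unsievedInvSqSum P N.sqrt * harmonic N) + N.sqrt * P) := by
    gcongr
    exact unsievedInvSqSum_nonneg P _
  linarith [card_sifted_exists_sq_dvd_le S N, card_sifted_exists_smallDivisorPairs_dvd_le S N,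
    card_sifted_exists_smallCofactorPairs_modEq_le S N]

end NoncyclicCount

section Residues

/-- Each prime divisor of `P` divides exactly one of `n` and the product. -/
lemma coprime_mul_add_prod_primeFactors {c n P : ℕ} (hP : P ≠ 0)
    (hc : ∀ p : ℕ, p.Prime → p ∣ c → p ∣ n) :
    (c * n + ∏ p ∈ P.primeFactors with ¬ p ∣ n, p).Coprime P := by
  set D := ∏ p ∈ P.primeFactors with ¬ p ∣ n, p
  have hD : ∀ p : ℕ, p.Prime → p ∣ P → (p ∣ D ↔ ¬ p ∣ n) := by
    intro p hp hpP
    rw [hp.prime.dvd_finsetProd_iff]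
    constructor
    · rintro ⟨r, hr_mem, hpr⟩
      obtain ⟨hr, hrn⟩ := mem_filter.1 hr_mem
      rwa [(Nat.prime_dvd_prime_iff_eq hp (Nat.prime_of_mem_primeFactors hr)).1 hpr]
    · exact fun hpn ↦ ⟨p, mem_filter.2 ⟨Nat.mem_primeFactors.2 ⟨hp, hpP, hP⟩, hpn⟩, dvd_rfl⟩
  refine Nat.coprime_of_dvd fun p hp hsum hpP ↦ ?_
  by_cases hpn : p ∣ n
  · exact (hD p hp hpP).1 ((Nat.dvd_add_right (hpn.mul_left c)).1 hsum) hpn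
  · have hpcn : p ∣ c * n := (Nat.dvd_add_left ((hD p hp hpP).2 hpn)).1 hsum
    exact hpn ((hp.dvd_mul.1 hpcn).elim (hc p hp) id)

variable {P n : ℕ} [NeZero P]

/-- The residues `x` modulo `P` such that `x` and `n - x` are both units: the classes of the
summands `a` in those decompositions `n = a + b` with `a` and `b` coprime to `P`. -/
def unitPairResidues (P n : ℕ) [NeZero P] : Finset (ZMod P) :=
  {x | IsUnit x ∧ IsUnit ((n : ZMod P) - x)}

lemma mem_unitPairResidues {x : ZMod P} :
    x ∈ unitPairResidues P n ↔ IsUnit x ∧ IsUnit ((n : ZMod P) - x) :=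
  mem_filter_univ x

lemma sub_mem_unitPairResidues {x : ZMod P} (hx : x ∈ unitPairResidues P n) :
    (n : ZMod P) - x ∈ unitPairResidues P n := by
  rw [mem_unitPairResidues] at hx ⊢
  rw [sub_sub_cancel]
  exact hx.symm

lemma unitPairResidues_nonempty (hn : Even n) : (unitPairResidues P n).Nonempty := by
  set D := ∏ p ∈ P.primeFactors with ¬ p ∣ n, p
  have htwo : (2 * n + D).Coprime P := coprime_mul_add_prod_primeFactors (NeZero.ne P)
    fun p hp hp2 ↦ (Nat.prime_dvd_prime_iff_eq hp Nat.prime_two).1 hp2 ▸ hn.two_dvd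
  have hone : (1 * n + D).Coprime P := coprime_mul_add_prod_primeFactors (NeZero.ne P)
    fun p hp hp1 ↦ absurd hp1 hp.not_dvd_one
  refine ⟨((2 * n + D : ℕ) : ZMod P),
    mem_unitPairResidues.2 ⟨(ZMod.isUnit_iff_coprime _ _).2 htwo, ?_⟩⟩
  have hsub : (n : ZMod P) - ((2 * n + D : ℕ) : ZMod P) = -((1 * n + D : ℕ) : ZMod P) := by
    push_cast
    ring
  rw [hsub, IsUnit.neg_iff]
  exact (ZMod.isUnit_iff_coprime _ _).2 hone

end Residues

lemma two_mul_main_add_error_lt_div {P N : ℕ} {θ : ℝ} (hP : 0 < P) (hθ : θ ≤ 1 / 4)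
    (hsqrt : 10 * P ^ 2 ≤ N.sqrt) :
    2 * ((N : ℝ) / P * θ + (P + 1) * N.sqrt) < (N / P : ℕ) := by
  have hP1 : (1 : ℝ) ≤ P := Nat.one_le_cast.2 hP
  have hsqrt' : 10 * (P : ℝ) ^ 2 ≤ N.sqrt := by exact_mod_cast hsqrt
  have hmain : (N : ℝ) / P * θ ≤ N / P * (1 / 4) := by gcongr
  have herror : 2 * (((P : ℝ) + 1) * N.sqrt) + 1 ≤ N / P / 2 := by
    rw [div_div, le_div_iff₀ (by positivity)]
    calc (2 * (((P : ℝ) + 1) * N.sqrt) + 1) * (P * 2) ≤ 5 * (P * N.sqrt) * (P * 2) := by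
          gcongr
          nlinarith
      _ = (10 * (P : ℝ) ^ 2) * N.sqrt := by ring
      _ ≤ N.sqrt * N.sqrt := by gcongr
      _ ≤ N := by exact_mod_cast N.sqrt_le
  have hfloor : (N : ℝ) / P < (N / P : ℕ) + 1 := by
    rw [← Nat.floor_div_eq_div (K := ℝ)]
    exact Nat.lt_floor_add_one _
  linarith

lemma two_mul_card_sifted_not_isCyclicNum_lt {P N : ℕ} [NeZero P] {S : Finset (ZMod P)}
    (hS : ∀ x ∈ S, IsUnit x) (hS_ne : S.Nonempty) (hP : 1 < P)
    (hdensity : unsievedInvSqSum P N.sqrt * (1 + 3 * harmonic N) ≤ 1 / 4)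
    (hsqrt : 10 * P ^ 2 ≤ N.sqrt) :
    2 * #{a ∈ sifted S N | ¬ IsCyclicNum a} < #(sifted S N) := by
  set θ : ℝ := unsievedInvSqSum P N.sqrt * (1 + 3 * harmonic N)
  have hPN : P ≤ N := le_trans (by nlinarith) N.sqrt_le_self
  have hS_pos : (0 : ℝ) < #S := Nat.cast_pos.2 hS_ne.card_pos
  have hlt : (2 * #{a ∈ sifted S N | ¬ IsCyclicNum a} : ℝ) < #(sifted S N) :=
    calc (2 * #{a ∈ sifted S N | ¬ IsCyclicNum a} : ℝ)
        ≤ 2 * (#S * (N / P * θ + (P + 1) * N.sqrt)) := by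
          gcongr
          exact card_sifted_not_isCyclicNum_le hS hP hPN
      _ = #S * (2 * (N / P * θ + (P + 1) * N.sqrt)) := by ring
      _ < #S * (N / P : ℕ) :=
          mul_lt_mul_of_pos_left (two_mul_main_add_error_lt_div (NeZero.pos P) hdensity hsqrt)
            hS_pos
      _ ≤ #(sifted S N) := by
          rw [mul_comm]
          exact_mod_cast div_mul_card_le_card_sifted S N
  exact_mod_cast hlt

lemma ten_mul_primorial_sq_le_sqrt {n z : ℕ} (hz : 2 ≤ z) (hn : 4 ^ (6 * z) ≤ n) :
    10 * primorial z ^ 2 ≤ n.sqrt := by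
  have hten : 10 ≤ 4 ^ z := (by norm_num : 10 ≤ 4 ^ 2).trans (Nat.pow_le_pow_right four_pos hz)
  calc 10 * primorial z ^ 2 ≤ 4 ^ z * (4 ^ z) ^ 2 := by
        gcongr
        exact primorial_le_four_pow z
    _ ≤ n.sqrt := Nat.le_sqrt'.2 (le_of_eq_of_le (by ring) hn)

lemma one_add_three_mul_harmonic_le {n z : ℕ} (hz : 1 ≤ z) (hn : n < 4 ^ (6 * (z + 1))) :
    1 + 3 * (harmonic n : ℝ) ≤ 76 * z := by
  have hz' : (1 : ℝ) ≤ z := Nat.one_le_cast.2 hz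
  have hlog_four : log 4 ≤ 2 := by
    rw [show (4 : ℝ) = 2 ^ 2 by norm_num, log_pow]
    push_cast
    linarith [log_two_lt_d9]
  have hlog : log n ≤ 12 * (z + 1) := by
    rcases n.eq_zero_or_pos with rfl | hn0
    · rw [Nat.cast_zero, log_zero]
      positivity
    calc log n ≤ log ((4 : ℝ) ^ (6 * (z + 1))) :=
          log_le_log (Nat.cast_pos.2 hn0) (by exact_mod_cast hn.le)
      _ = 6 * (z + 1) * log 4 := by
          rw [log_pow]
          push_cast
          ring
      _ ≤ 6 * (z + 1) * 2 := by gcongr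
      _ = 12 * (z + 1) := by ring
  linarith [harmonic_le_one_add_log n]

/-- The level `z ≈ log₄ n / 6` keeps `primorial z ≤ 4 ^ z ≤ n ^ (1 / 6)`, so the error terms are
negligible, while `harmonic n` is only `O(z)`. -/
lemma eventually_exists_sieve_level :
    ∀ᶠ n : ℕ in atTop, ∃ z, 2 ≤ z ∧
      unsievedInvSqSum (primorial z) n.sqrt * (1 + 3 * harmonic n) ≤ 1 / 4 ∧
      10 * primorial z ^ 2 ≤ n.sqrt := by
  have hlevel : Tendsto (fun n ↦ Nat.log 4 n / 6) atTop atTop :=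
    (Nat.tendsto_div_const_atTop (by norm_num)).comp <|
      tendsto_atTop_atTop_of_monotone Nat.log_monotone fun k ↦
        ⟨4 ^ k, (Nat.log_pow (by norm_num) k).ge⟩
  filter_upwards [hlevel.eventually
      (eventually_sum_prime_inv_sq_le (by norm_num : (0 : ℝ) < 1 / 304)),
    hlevel.eventually_ge_atTop 2, eventually_gt_atTop 0] with n hsum hz hn
  set z := Nat.log 4 n / 6
  have hlower : 4 ^ (6 * z) ≤ n := Nat.pow_le_of_le_log hn.ne' (Nat.mul_div_le _ _)
  have hupper : n < 4 ^ (6 * (z + 1)) := Nat.lt_pow_of_log_lt (by norm_num) (by lia)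
  have hz0 : (z : ℝ) ≠ 0 := by norm_cast; lia
  have hharmonic : (0 : ℝ) < harmonic n := Rat.cast_pos.2 (harmonic_pos hn.ne')
  refine ⟨z, hz, ?_, ten_mul_primorial_sq_le_sqrt hz hlower⟩
  calc unsievedInvSqSum (primorial z) n.sqrt * (1 + 3 * harmonic n)
      ≤ 1 / 304 / z * (76 * z) := by
        rw [unsievedInvSqSum_primorial]
        gcongr
        · exact hsum _
        · exact one_add_three_mul_harmonic_le (by lia) hupper
    _ = 1 / 4 := by
        field_simp
        norm_num

lemma exists_mem_notMem_sub_notMem {n : ℕ} {A B : Finset ℕ} (hA : ∀ a ∈ A, a ≤ n)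
    (hcard : 2 * #B < #A) : ∃ a ∈ A, a ∉ B ∧ n - a ∉ B := by
  have hreflect : #(B.image (n - ·)) ≤ #B := card_image_le
  have hunion : #(B ∪ B.image (n - ·)) < #A := by
    have := card_union_le B (B.image (n - ·))
    lia
  obtain ⟨a, haA, ha⟩ := exists_mem_notMem_of_card_lt_card hunion
  rw [mem_union, not_or] at ha
  exact ⟨a, haA, ha.1, fun hsub ↦ ha.2 (mem_image.2 ⟨n - a, hsub, Nat.sub_sub_self (hA a haA)⟩)⟩

theorem even_eq_add_two_cyclics_of_large :
    ∃ N : ℕ, ∀ n : ℕ, N ≤ n → Even n →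
      ∃ a b : ℕ, IsCyclicNum a ∧ IsCyclicNum b ∧ a + b = n := by
  obtain ⟨N, hN⟩ := eventually_atTop.1 eventually_exists_sieve_level
  refine ⟨N, fun n hn heven ↦ ?_⟩
  obtain ⟨z, hz, hdensity, hsqrt⟩ := hN n hn
  have : NeZero (primorial z) := ⟨primorial_ne_zero z⟩
  have hP : 1 < primorial z := hz.trans le_primorial_self
  set S := unitPairResidues (primorial z) n
  have hcard : 2 * #{a ∈ sifted S n | ¬ IsCyclicNum a} < #(sifted S n) :=
    two_mul_card_sifted_not_isCyclicNum_lt (fun x hx ↦ (mem_unitPairResidues.1 hx).1)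
      (unitPairResidues_nonempty heven) hP hdensity hsqrt
  obtain ⟨a, ha, ha_good, hna_good⟩ :=
    exists_mem_notMem_sub_notMem (fun a ha ↦ (mem_sifted.1 ha).1.le) hcard
  obtain ⟨han, haS⟩ := mem_sifted.1 ha
  have hcyc : IsCyclicNum a := by simpa [ha] using ha_good
  have hna : n - a ∈ sifted S n := by
    rw [mem_sifted, Nat.cast_sub han.le]
    exact ⟨Nat.sub_lt_of_pos_le hcyc.1 han.le, sub_mem_unitPairResidues haS⟩
  have hcyc' : IsCyclicNum (n - a) := by simpa [hna] using hna_good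
  exact ⟨a, n - a, hcyc, hcyc', Nat.add_sub_cancel' han.le⟩
end

section
/- There are infinitely many cyclic numbers c such that c + 2 is also cyclic. -/
open Filter Asymptotics Real

/-!
Let `P` be the product of the primes up to `y`, and look at the pairs `e - 1`, `e + 1` with `P ∣ e`
and `e < X = P ^ 6`. A number `n` coprime to `P` fails to be cyclic only if some prime `p > y`
satisfies `p ^ 2 ∣ n` or `p * (k * p + 1) ∣ n` for some `k ≥ 1`. For a fixed `p` this happens for a
proportion `O(log X / p ^ 2)` of the `n` in a reduced residue class modulo `P`. Chebyshev's bound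
gives `∑ 1 / p ^ 2 = O(1 / (y log y))` over the primes `p > y`, whereas `log X = 6 log P = O(y)`,
so the proportion of failures is `O(1 / log y)`. Once it is below one half, some pair consists of
two cyclic numbers.
-/

section Obstruction

theorem exists_prime_dvd_gcd_totient_of_not_isCyclicNum {n : ℕ} (hn : 0 < n)
    (h : ¬ IsCyclicNum n) : ∃ p, p.Prime ∧ p ∣ n.gcd n.totient :=
  Nat.exists_prime_and_dvd fun hgcd => h ⟨hn, hgcd⟩

theorem sq_dvd_of_dvd_pow_factorization_sub_one {p n : ℕ} (hp : p.Prime) (hn : n ≠ 0)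
    (h : p ∣ p ^ (n.factorization p - 1)) : p ^ 2 ∣ n := by
  have hexp : n.factorization p - 1 ≠ 0 := by
    intro h0
    rw [h0, pow_zero] at h
    exact hp.one_lt.ne' (Nat.dvd_one.1 h)
  exact (hp.pow_dvd_iff_le_factorization hn).2 (by omega)

theorem sq_dvd_or_exists_mul_dvd_of_dvd_gcd_totient {p n : ℕ} (hp : p.Prime)
    (h : p ∣ n.gcd n.totient) : p ^ 2 ∣ n ∨ ∃ k, 1 ≤ k ∧ p * (k * p + 1) ∣ n := by
  rcases eq_or_ne n 0 with rfl | hn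
  · exact Or.inl (dvd_zero _)
  obtain ⟨hpn, hpφ⟩ := Nat.dvd_gcd_iff.1 h
  rw [Nat.totient_eq_prod_factorization hn, Finsupp.prod, hp.prime.dvd_finsetProd_iff] at hpφ
  obtain ⟨q, hqsupp, hpq⟩ := hpφ
  have hq : q.Prime := Nat.prime_of_mem_primeFactors hqsupp
  have hqn : q ∣ n := Nat.dvd_of_mem_primeFactors hqsupp
  rcases hp.dvd_mul.1 hpq with hpow | ⟨k, hk⟩
  · obtain rfl : p = q := (Nat.prime_dvd_prime_iff_eq hp hq).1 (hp.dvd_of_dvd_pow hpow)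
    exact Or.inl (sq_dvd_of_dvd_pow_factorization_sub_one hp hn hpow)
  · have hq_eq : q = k * p + 1 := by have := hq.pos; rw [mul_comm k p]; omega
    have hk1 : 1 ≤ k := by
      rcases k with _ | k
      · exact absurd hq_eq (by simpa using hq.one_lt.ne')
      · exact Nat.le_add_left 1 k
    have hcop : p.Coprime q := by rw [hq_eq]; simp
    exact Or.inr ⟨k, hk1, hq_eq ▸ hcop.mul_dvd_of_dvd_of_dvd hpn hqn⟩

theorem sq_le_of_dvd_gcd_totient {p n : ℕ} (hp : p.Prime) (hn : 0 < n)
    (h : p ∣ n.gcd n.totient) : p ^ 2 ≤ n := by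
  rcases sq_dvd_or_exists_mul_dvd_of_dvd_gcd_totient hp h with hsq | ⟨k, hk, hdvd⟩
  · exact Nat.le_of_dvd hn hsq
  · calc p ^ 2 = p * p := sq p
      _ ≤ p * (k * p + 1) := by gcongr; nlinarith
      _ ≤ n := Nat.le_of_dvd hn hdvd

/-- A divisor `p * (k * p + 1)` too large to be counted as a modulus leaves
a cofactor `m < P`, and `n = m * p * (k * p + 1)` is a congruence with the small modulus
`m * p ^ 2`. -/
theorem sq_dvd_or_exists_mul_dvd_or_exists_modEq {p n P X : ℕ} (hp : p.Prime) (hn : 0 < n)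
    (hnX : n < X) (h : p ∣ n.gcd n.totient) :
    p ^ 2 ∣ n ∨ (∃ k ∈ Finset.Icc 1 X, P * (p * (k * p + 1)) ≤ X ∧ p * (k * p + 1) ∣ n) ∨
      ∃ m ∈ Finset.Icc 1 P, n ≡ m * p [MOD m * p ^ 2] := by
  rcases sq_dvd_or_exists_mul_dvd_of_dvd_gcd_totient hp h with hsq | ⟨k, hk, m, rfl⟩
  · exact Or.inl hsq
  have hm : 0 < m := Nat.pos_of_mul_pos_left hn
  have hkX : k ≤ X := by
    calc k ≤ k * p + 1 := by nlinarith [hp.pos]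
      _ ≤ p * m * (k * p + 1) := Nat.le_mul_of_pos_left _ (Nat.mul_pos hp.pos hm)
      _ = p * (k * p + 1) * m := by ring
      _ ≤ X := hnX.le
  refine Or.inr ((le_or_gt (P * (p * (k * p + 1))) X).imp
    (fun hle => ⟨k, Finset.mem_Icc.2 ⟨hk, hkX⟩, hle, m, rfl⟩) fun hlt => ?_)
  have hmP : m < P := lt_of_mul_lt_mul_left' (a := p * (k * p + 1)) (by linarith)
  refine ⟨m, Finset.mem_Icc.2 ⟨hm, hmP.le⟩, ?_⟩
  have hexpand : p * (k * p + 1) * m = m * p + m * p ^ 2 * k := by ring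
  rw [hexpand]
  exact Nat.add_modulus_mul_modEq_iff.2 rfl

end Obstruction

section Sums

theorem sum_Icc_one_inv_le_one_add_log (n : ℕ) :
    ∑ k ∈ Finset.Icc 1 n, (k : ℝ)⁻¹ ≤ 1 + Real.log n := by
  simpa [harmonic_eq_sum_Icc] using harmonic_le_one_add_log n

theorem sum_Ioc_inv_sq_le_inv_s18 {z : ℕ} (hz : z ≠ 0) (X : ℕ) :
    ∑ p ∈ Finset.Ioc z X, ((p : ℝ) ^ 2)⁻¹ ≤ (z : ℝ)⁻¹ := by
  rcases le_or_gt z X with hzX | hXz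
  · have := sum_Ioc_inv_sq_le_sub (α := ℝ) hz hzX
    exact this.trans (sub_le_self _ (by positivity))
  · rw [Finset.Ioc_eq_empty (by omega), Finset.sum_empty]
    positivity

theorem mul_inv_sq_sub_inv_succ_sq_le {C F t : ℝ} (ht : 0 < t) (hC : 0 ≤ C) (hF : F ≤ C * t) :
    F * (1 / t ^ 2 - 1 / (t + 1) ^ 2) ≤ 2 * C * (1 / t - 1 / (t + 1)) := by
  have hsq : 1 / t ^ 2 - 1 / (t + 1) ^ 2 = (2 * t + 1) / (t ^ 2 * (t + 1) ^ 2) := by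
    field_simp; ring
  calc F * (1 / t ^ 2 - 1 / (t + 1) ^ 2)
      ≤ C * t * ((2 * (t + 1)) / (t ^ 2 * (t + 1) ^ 2)) := by
        rw [hsq]; gcongr; linarith
    _ = 2 * C * (1 / t - 1 / (t + 1)) := by field_simp; ring

theorem sum_Ioc_div_sq_le_of_sum_Icc_le {f : ℕ → ℝ} {C : ℝ} {y z : ℕ} (hy : 0 < y) (hyz : y ≤ z)
    (hf : ∀ n, 0 ≤ ∑ k ∈ Finset.Icc 0 n, f k) (hfC : ∀ n : ℕ, ∑ k ∈ Finset.Icc 0 n, f k ≤ C * n) :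
    ∑ n ∈ Finset.Ioc y z, f n / (n : ℝ) ^ 2 ≤ 2 * C / y := by
  have hC : 0 ≤ C := by simpa using (hf 1).trans (hfC 1)
  have partial_summation : ∑ n ∈ Finset.Ioc y z, f n / (n : ℝ) ^ 2 ≤
      (∑ k ∈ Finset.Icc 0 z, f k) / (z : ℝ) ^ 2 + 2 * C * (1 / y - 1 / z) := by
    induction z, hyz using Nat.le_induction with
    | base => simpa using div_nonneg (hf y) (by positivity)
    | succ z hyz ih =>
      have hz : (0 : ℝ) < z := by exact_mod_cast hy.trans_le hyz
      have hstep := mul_inv_sq_sub_inv_succ_sq_le hz hC (hfC z)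
      rw [Finset.sum_Ioc_succ_top hyz, Finset.sum_Icc_succ_top (Nat.zero_le _), add_div]
      push_cast
      rw [mul_sub, mul_one_div, mul_one_div] at hstep
      linarith
  have hz : (0 : ℝ) < z := by exact_mod_cast hy.trans_le hyz
  calc ∑ n ∈ Finset.Ioc y z, f n / (n : ℝ) ^ 2
      ≤ C * z / (z : ℝ) ^ 2 + 2 * C * (1 / y - 1 / z) := by
        refine partial_summation.trans ?_
        gcongr
        exact hfC z
    _ = 2 * C / y - C / z := by field_simp; ring
    _ ≤ 2 * C / y := sub_le_self _ (by positivity)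

theorem sum_prime_log_div_sq_le {y z : ℕ} (hy : 0 < y) (hyz : y ≤ z) :
    ∑ p ∈ Finset.Ioc y z with p.Prime, Real.log p / (p : ℝ) ^ 2 ≤ 2 * Real.log 4 / y := by
  have htheta (n : ℕ) : ∑ k ∈ Finset.Icc 0 n, (if k.Prime then Real.log k else 0) =
      Chebyshev.theta n := by
    rw [Chebyshev.theta_eq_sum_Icc, Nat.floor_natCast, Finset.sum_filter]
  have hsum := sum_Ioc_div_sq_le_of_sum_Icc_le
    (f := fun k => if k.Prime then Real.log k else 0) (C := Real.log 4) hy hyz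
    (fun n => htheta n ▸ Chebyshev.theta_nonneg _)
    (fun n => htheta n ▸ Chebyshev.theta_le_log4_mul_x n.cast_nonneg)
  simpa only [Finset.sum_filter, ite_div, zero_div] using hsum

theorem sum_prime_inv_sq_mul_log_le {y z : ℕ} (hy : 0 < y) (hyz : y ≤ z) :
    (∑ p ∈ Finset.Ioc y z with p.Prime, ((p : ℝ) ^ 2)⁻¹) * Real.log y ≤ 2 * Real.log 4 / y := by
  refine le_trans ?_ (sum_prime_log_div_sq_le hy hyz)
  rw [Finset.sum_mul]
  refine Finset.sum_le_sum fun p hp => ?_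
  have hyp : y < p := (Finset.mem_Ioc.1 (Finset.mem_filter.1 hp).1).1
  rw [inv_mul_eq_div]
  gcongr

end Sums

section Progression

/-- The positive integers below `X` in the residue class of `r` modulo `P`, in which the cyclic
numbers are sought. -/
def progression (P r X : ℕ) : Finset ℕ := {n ∈ Finset.Ico 1 X | n ≡ r [MOD P]}

theorem mem_progression {P r X n : ℕ} :
    n ∈ progression P r X ↔ (1 ≤ n ∧ n < X) ∧ n ≡ r [MOD P] := by
  rw [progression, Finset.mem_filter, Finset.mem_Ico]

theorem progression_subset_progression_one (P r X : ℕ) :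
    progression P r X ⊆ progression 1 r X := fun _ hn =>
  mem_progression.2 ⟨(mem_progression.1 hn).1, Nat.modEq_one⟩

theorem coprime_of_mem_progression {P r X n : ℕ} (hr : r.Coprime P) (hn : n ∈ progression P r X) :
    n.Coprime P :=
  (mem_progression.1 hn).2.gcd_eq.trans hr

theorem card_le_sum_of_forall_exists_mem {α ι : Type*} {s : Finset α} {t : Finset ι}
    {f : ι → Finset α} {g : ι → ℝ} (hcover : ∀ a ∈ s, ∃ i ∈ t, a ∈ f i)
    (hcard : ∀ i ∈ t, ((f i).card : ℝ) ≤ g i) : (s.card : ℝ) ≤ ∑ i ∈ t, g i := by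
  classical
  have hsub : s ⊆ t.biUnion f := fun a ha => Finset.mem_biUnion.2 (hcover a ha)
  have hle : s.card ≤ ∑ i ∈ t, (f i).card :=
    (Finset.card_le_card hsub).trans Finset.card_biUnion_le
  calc (s.card : ℝ) ≤ ∑ i ∈ t, ((f i).card : ℝ) := by exact_mod_cast hle
    _ ≤ ∑ i ∈ t, g i := Finset.sum_le_sum hcard

theorem card_le_two_mul_div_of_modEq {D X : ℕ} {s : Finset ℕ} (hD : 0 < D) (hDX : D ≤ X)
    (hlt : ∀ n ∈ s, n < X) (hmod : ∀ m ∈ s, ∀ n ∈ s, m ≡ n [MOD D]) :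
    (s.card : ℝ) ≤ 2 * X / D := by
  rcases s.eq_empty_or_nonempty with rfl | ⟨v, hv⟩
  · rw [Finset.card_empty, Nat.cast_zero]; positivity
  have hsub : s ⊆ {n ∈ Finset.range X | n ≡ v [MOD D]} := fun n hn =>
    Finset.mem_filter.2 ⟨Finset.mem_range.2 (hlt n hn), hmod n hn v hv⟩
  have hcard : s.card ≤ X / D + 1 := by
    refine (Finset.card_le_card hsub).trans ?_
    rw [← Nat.count_eq_card_filter_range, Nat.count_modEq_card X hD]
    gcongr
    split_ifs <;> norm_num
  have hone : (1 : ℝ) ≤ X / D := (one_le_div (by positivity)).2 (by exact_mod_cast hDX)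
  calc (s.card : ℝ) ≤ ((X / D : ℕ) : ℝ) + 1 := by exact_mod_cast hcard
    _ ≤ X / D + X / D := add_le_add Nat.cast_div_le hone
    _ = 2 * X / D := by ring

variable {P r X : ℕ}

/-- The hypothesis `d ∣ a ^ 2` makes every prime factor of `d` divide each counted `n`, so that
`d` is coprime to `P` unless the set is empty. -/
theorem card_progression_filter_modEq_le {a d : ℕ} (hr : r.Coprime P) (hP : 0 < P) (hd : 0 < d)
    (hda : d ∣ a ^ 2) (hPd : P * d ≤ X) :
    (((progression P r X).filter (· ≡ a [MOD d])).card : ℝ) ≤ 2 * X / P * (d : ℝ)⁻¹ := by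
  have hcop {n : ℕ} (hn : n ∈ progression P r X) (hna : n ≡ a [MOD d]) : P.Coprime d := by
    have hdn : d ∣ n ^ 2 := ((hna.pow 2).dvd_iff dvd_rfl).2 hda
    exact (((coprime_of_mem_progression hr hn).pow_left 2).coprime_dvd_left hdn).symm
  have hcard := card_le_two_mul_div_of_modEq (D := P * d)
    (s := (progression P r X).filter (· ≡ a [MOD d])) (by positivity) hPd ?_ ?_
  · refine hcard.trans_eq ?_
    push_cast
    field_simp
  · intro n hn
    exact (mem_progression.1 (Finset.mem_filter.1 hn).1).1.2
  · intro m hm n hn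
    obtain ⟨hm, hma⟩ := Finset.mem_filter.1 hm
    obtain ⟨hn, hna⟩ := Finset.mem_filter.1 hn
    exact (Nat.modEq_and_modEq_iff_modEq_mul (hcop hm hma)).1
      ⟨(mem_progression.1 hm).2.trans (mem_progression.1 hn).2.symm, hma.trans hna.symm⟩

theorem card_progression_filter_dvd_le {d : ℕ} (hr : r.Coprime P) (hP : 0 < P) (hd : 0 < d)
    (hPd : P * d ≤ X) :
    (((progression P r X).filter (d ∣ ·)).card : ℝ) ≤ 2 * X / P * (d : ℝ)⁻¹ := by
  simpa only [Nat.modEq_zero_iff_dvd] using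
    card_progression_filter_modEq_le hr hP hd (a := 0) (by simp) hPd

theorem card_progression_filter_exists_mul_dvd_le {p : ℕ} (hr : r.Coprime P) (hP : 0 < P)
    (hp : 0 < p) :
    (((progression P r X).filter fun n =>
      ∃ k ∈ Finset.Icc 1 X, P * (p * (k * p + 1)) ≤ X ∧ p * (k * p + 1) ∣ n).card : ℝ) ≤
      2 * X / P * ((p : ℝ) ^ 2)⁻¹ * (1 + Real.log X) := by
  let ks := {k ∈ Finset.Icc 1 X | P * (p * (k * p + 1)) ≤ X}
  have hcard : (((progression P r X).filter fun n =>
      ∃ k ∈ Finset.Icc 1 X, P * (p * (k * p + 1)) ≤ X ∧ p * (k * p + 1) ∣ n).card : ℝ) ≤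
      ∑ k ∈ ks, 2 * X / P * ((p : ℝ) ^ 2)⁻¹ * (k : ℝ)⁻¹ := by
    refine card_le_sum_of_forall_exists_mem
      (f := fun k => (progression P r X).filter (p * (k * p + 1) ∣ ·)) ?_ ?_
    · intro n hn
      obtain ⟨hn, k, hk, hkX, hdvd⟩ := Finset.mem_filter.1 hn
      exact ⟨k, Finset.mem_filter.2 ⟨hk, hkX⟩, Finset.mem_filter.2 ⟨hn, hdvd⟩⟩
    · intro k hk
      obtain ⟨hk, hkX⟩ := Finset.mem_filter.1 hk
      have hk_pos : 0 < k := (Finset.mem_Icc.1 hk).1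
      have hle : (p : ℝ) ^ 2 * k ≤ ((p * (k * p + 1) : ℕ) : ℝ) := by
        exact_mod_cast (by nlinarith : p ^ 2 * k ≤ p * (k * p + 1))
      refine (card_progression_filter_dvd_le hr hP (by positivity) hkX).trans ?_
      rw [mul_assoc, ← mul_inv]
      gcongr
  calc _ ≤ ∑ k ∈ ks, 2 * X / P * ((p : ℝ) ^ 2)⁻¹ * (k : ℝ)⁻¹ := hcard
    _ ≤ ∑ k ∈ Finset.Icc 1 X, 2 * X / P * ((p : ℝ) ^ 2)⁻¹ * (k : ℝ)⁻¹ :=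
      Finset.sum_le_sum_of_subset_of_nonneg (Finset.filter_subset _ _) fun _ _ _ => by positivity
    _ ≤ _ := by rw [← Finset.mul_sum]; gcongr; exact sum_Icc_one_inv_le_one_add_log X

theorem card_progression_filter_exists_modEq_le {p : ℕ} (hr : r.Coprime P) (hP : 0 < P)
    (hp : 0 < p) (hX : P ^ 2 * p ^ 2 ≤ X) :
    (((progression P r X).filter fun n =>
      ∃ m ∈ Finset.Icc 1 P, n ≡ m * p [MOD m * p ^ 2]).card : ℝ) ≤
      2 * X / P * ((p : ℝ) ^ 2)⁻¹ * (1 + Real.log P) := by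
  have hcard : (((progression P r X).filter fun n =>
      ∃ m ∈ Finset.Icc 1 P, n ≡ m * p [MOD m * p ^ 2]).card : ℝ) ≤
      ∑ m ∈ Finset.Icc 1 P, 2 * X / P * ((p : ℝ) ^ 2)⁻¹ * (m : ℝ)⁻¹ := by
    refine card_le_sum_of_forall_exists_mem
      (f := fun m => (progression P r X).filter (· ≡ m * p [MOD m * p ^ 2])) ?_ ?_
    · intro n hn
      obtain ⟨hn, m, hm, hmod⟩ := Finset.mem_filter.1 hn
      exact ⟨m, hm, Finset.mem_filter.2 ⟨hn, hmod⟩⟩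
    · intro m hm
      obtain ⟨hm_pos, hmP⟩ := Finset.mem_Icc.1 hm
      have hdvd : m * p ^ 2 ∣ (m * p) ^ 2 := ⟨m, by ring⟩
      have hle : P * (m * p ^ 2) ≤ X := by
        calc P * (m * p ^ 2) ≤ P * (P * p ^ 2) := by gcongr
          _ = P ^ 2 * p ^ 2 := by ring
          _ ≤ X := hX
      refine (card_progression_filter_modEq_le hr hP (by positivity) hdvd hle).trans_eq ?_
      push_cast
      rw [mul_inv]
      ring
  refine hcard.trans ?_
  rw [← Finset.mul_sum]
  gcongr
  exact sum_Icc_one_inv_le_one_add_log P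

theorem card_progression_filter_dvd_gcd_totient_le {p : ℕ} (hr : r.Coprime P) (hP : 0 < P)
    (hp : p.Prime) (hX : P ^ 2 * p ^ 2 ≤ X) :
    (((progression P r X).filter fun n => p ∣ n.gcd n.totient).card : ℝ) ≤
      2 * X / P * (3 + 2 * Real.log X) * ((p : ℝ) ^ 2)⁻¹ := by
  set squares := (progression P r X).filter (p ^ 2 ∣ ·)
  set divisible := (progression P r X).filter fun n =>
    ∃ k ∈ Finset.Icc 1 X, P * (p * (k * p + 1)) ≤ X ∧ p * (k * p + 1) ∣ n
  set switched := (progression P r X).filter fun n =>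
    ∃ m ∈ Finset.Icc 1 P, n ≡ m * p [MOD m * p ^ 2]
  have hsub : ((progression P r X).filter fun n => p ∣ n.gcd n.totient) ⊆
      squares ∪ (divisible ∪ switched) := by
    intro n hn
    obtain ⟨hn, hpn⟩ := Finset.mem_filter.1 hn
    have ⟨hn_pos, hnX⟩ := (mem_progression.1 hn).1
    simpa only [squares, divisible, switched, Finset.mem_union, Finset.mem_filter, hn, true_and]
      using sq_dvd_or_exists_mul_dvd_or_exists_modEq hp hn_pos hnX hpn
  have hcard : (((progression P r X).filter fun n => p ∣ n.gcd n.totient).card : ℝ) ≤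
      squares.card + (divisible.card + switched.card) := by
    have hunion := Finset.card_union_le divisible switched
    exact_mod_cast (Finset.card_le_card hsub).trans ((Finset.card_union_le _ _).trans (by omega))
  have hPX : P ≤ X := by nlinarith [hp.one_lt, Nat.mul_le_mul hP hp.one_lt.le]
  have hlog : Real.log P ≤ Real.log X := Real.log_le_log (by positivity) (by exact_mod_cast hPX)
  have hsq : (squares.card : ℝ) ≤ 2 * X / P * ((p : ℝ) ^ 2)⁻¹ := by
    have hle : P * p ^ 2 ≤ X := le_trans (by gcongr; exact Nat.le_self_pow two_ne_zero P) hX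
    simpa using card_progression_filter_dvd_le hr hP (pow_pos hp.pos 2) hle
  calc _ ≤ 2 * X / P * ((p : ℝ) ^ 2)⁻¹ + (2 * X / P * ((p : ℝ) ^ 2)⁻¹ * (1 + Real.log X) +
        2 * X / P * ((p : ℝ) ^ 2)⁻¹ * (1 + Real.log P)) :=
      hcard.trans <| add_le_add hsq <| add_le_add
        (card_progression_filter_exists_mul_dvd_le hr hP hp.pos)
        (card_progression_filter_exists_modEq_le hr hP hp.pos hX)
    _ ≤ 2 * X / P * ((p : ℝ) ^ 2)⁻¹ + (2 * X / P * ((p : ℝ) ^ 2)⁻¹ * (1 + Real.log X) +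
        2 * X / P * ((p : ℝ) ^ 2)⁻¹ * (1 + Real.log X)) := by gcongr
    _ = _ := by ring

theorem card_progression_one_filter_dvd_gcd_totient_le {p : ℕ} (hp : p.Prime) (r X : ℕ) :
    (((progression 1 r X).filter fun n => p ∣ n.gcd n.totient).card : ℝ) ≤
      2 * X * (3 + 2 * Real.log X) * ((p : ℝ) ^ 2)⁻¹ := by
  rcases le_or_gt (p ^ 2) X with hle | hlt
  · simpa using card_progression_filter_dvd_gcd_totient_le (r.coprime_one_right) one_pos hp
      (X := X) (by simpa using hle)
  · have hempty : ((progression 1 r X).filter fun n => p ∣ n.gcd n.totient) = ∅ := by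
      refine Finset.filter_eq_empty_iff.2 fun n hn hpn => ?_
      have ⟨hn_pos, hnX⟩ := (mem_progression.1 hn).1
      exact (hnX.trans hlt).not_ge (sq_le_of_dvd_gcd_totient hp hn_pos hpn)
    rw [hempty, Finset.card_empty, Nat.cast_zero]
    positivity

theorem exists_prime_mem_Ioc_dvd_gcd_totient {y n : ℕ} (hr : r.Coprime P)
    (hy : ∀ p : ℕ, p.Prime → p ≤ y → p ∣ P) (hn : n ∈ progression P r X)
    (hbad : ¬ IsCyclicNum n) : ∃ p ∈ Finset.Ioc y X, p.Prime ∧ p ∣ n.gcd n.totient := by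
  have ⟨hn_pos, hnX⟩ := (mem_progression.1 hn).1
  obtain ⟨p, hp, hpn⟩ := exists_prime_dvd_gcd_totient_of_not_isCyclicNum hn_pos hbad
  have hp_dvd : p ∣ n := hpn.trans (Nat.gcd_dvd_left _ _)
  have hyp : y < p := by
    by_contra! hpy
    exact Nat.not_coprime_of_dvd_of_dvd hp.one_lt hp_dvd (hy p hp hpy)
      (coprime_of_mem_progression hr hn)
  exact ⟨p, Finset.mem_Ioc.2 ⟨hyp, (Nat.le_of_dvd hn_pos hp_dvd).trans hnX.le⟩, hp, hpn⟩

theorem card_filter_exists_prime_dvd_gcd_totient_le {s I : Finset ℕ} {K : ℝ}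
    (hs : ∀ p ∈ I, p.Prime →
      ((s.filter fun n => p ∣ n.gcd n.totient).card : ℝ) ≤ K * ((p : ℝ) ^ 2)⁻¹) :
    ((s.filter fun n => ∃ p ∈ I, p.Prime ∧ p ∣ n.gcd n.totient).card : ℝ) ≤
      K * ∑ p ∈ I with p.Prime, ((p : ℝ) ^ 2)⁻¹ := by
  rw [Finset.mul_sum]
  refine card_le_sum_of_forall_exists_mem
    (f := fun p => s.filter fun n => p ∣ n.gcd n.totient) ?_ fun p hp => ?_
  · intro n hn
    obtain ⟨hn, p, hpI, hp, hpn⟩ := Finset.mem_filter.1 hn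
    exact ⟨p, Finset.mem_filter.2 ⟨hpI, hp⟩, Finset.mem_filter.2 ⟨hn, hpn⟩⟩
  · obtain ⟨hpI, hp⟩ := Finset.mem_filter.1 hp
    exact hs p hpI hp

theorem card_progression_filter_exists_prime_mem_Ioc_le {z : ℕ} (y : ℕ) (hr : r.Coprime P)
    (hP : 0 < P) (hX : P ^ 2 * z ^ 2 ≤ X) :
    (((progression P r X).filter fun n =>
      ∃ p ∈ Finset.Ioc y z, p.Prime ∧ p ∣ n.gcd n.totient).card : ℝ) ≤
      2 * X / P * (3 + 2 * Real.log X) *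
        ∑ p ∈ Finset.Ioc y z with p.Prime, ((p : ℝ) ^ 2)⁻¹ := by
  refine card_filter_exists_prime_dvd_gcd_totient_le fun p hp_mem hp => ?_
  have hpz : p ≤ z := (Finset.mem_Ioc.1 hp_mem).2
  exact card_progression_filter_dvd_gcd_totient_le hr hP hp (hX.trans' (by gcongr))

theorem card_progression_one_filter_exists_prime_mem_Ioc_le {z : ℕ} (hz : 0 < z) (r X : ℕ) :
    (((progression 1 r X).filter fun n =>
      ∃ p ∈ Finset.Ioc z X, p.Prime ∧ p ∣ n.gcd n.totient).card : ℝ) ≤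
      2 * X * (3 + 2 * Real.log X) * (z : ℝ)⁻¹ := by
  have htail : ∑ p ∈ Finset.Ioc z X with p.Prime, ((p : ℝ) ^ 2)⁻¹ ≤ (z : ℝ)⁻¹ :=
    (Finset.sum_le_sum_of_subset_of_nonneg (Finset.filter_subset _ _)
      fun _ _ _ => by positivity).trans (sum_Ioc_inv_sq_le_inv_s18 hz.ne' X)
  refine (card_filter_exists_prime_dvd_gcd_totient_le fun p _ hp =>
    card_progression_one_filter_dvd_gcd_totient_le hp r X).trans ?_
  gcongr

/-- Obstructing primes in `(y, z]` are counted within the progression, those beyond `z` among all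
integers, at the cost of a factor `P`. -/
theorem card_progression_filter_not_isCyclicNum_le {y z : ℕ} (hr : r.Coprime P) (hP : 0 < P)
    (hy : ∀ p : ℕ, p.Prime → p ≤ y → p ∣ P) (hz : 0 < z) (hX : P ^ 2 * z ^ 2 ≤ X) :
    (((progression P r X).filter (¬ IsCyclicNum ·)).card : ℝ) ≤
      2 * X / P * (3 + 2 * Real.log X) *
        (∑ p ∈ Finset.Ioc y z with p.Prime, ((p : ℝ) ^ 2)⁻¹ + P / z) := by
  set medium := (progression P r X).filter fun n =>
    ∃ p ∈ Finset.Ioc y z, p.Prime ∧ p ∣ n.gcd n.totient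
  set large := (progression 1 r X).filter fun n =>
    ∃ p ∈ Finset.Ioc z X, p.Prime ∧ p ∣ n.gcd n.totient
  have hsub : (progression P r X).filter (¬ IsCyclicNum ·) ⊆ medium ∪ large := by
    intro n hn
    obtain ⟨hn, hbad⟩ := Finset.mem_filter.1 hn
    obtain ⟨p, hp_mem, hp⟩ := exists_prime_mem_Ioc_dvd_gcd_totient hr hy hn hbad
    obtain ⟨hyp, hpX⟩ := Finset.mem_Ioc.1 hp_mem
    refine Finset.mem_union.2 ((le_or_gt p z).imp (fun hpz => ?_) fun hzp => ?_)
    · exact Finset.mem_filter.2 ⟨hn, p, Finset.mem_Ioc.2 ⟨hyp, hpz⟩, hp⟩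
    · exact Finset.mem_filter.2
        ⟨progression_subset_progression_one P r X hn, p, Finset.mem_Ioc.2 ⟨hzp, hpX⟩, hp⟩
  calc _ ≤ (medium.card : ℝ) + large.card := by
        exact_mod_cast (Finset.card_le_card hsub).trans (Finset.card_union_le _ _)
    _ ≤ 2 * X / P * (3 + 2 * Real.log X) * ∑ p ∈ Finset.Ioc y z with p.Prime, ((p : ℝ) ^ 2)⁻¹ +
        2 * X * (3 + 2 * Real.log X) * (z : ℝ)⁻¹ :=
      add_le_add (card_progression_filter_exists_prime_mem_Ioc_le y hr hP hX)
        (card_progression_one_filter_exists_prime_mem_Ioc_le hz r X)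
    _ = _ := by field_simp

theorem card_filter_not_isCyclicNum_mul_add_le {T : ℕ} (hP : 0 < P) (hr : 0 < r)
    (hX : ∀ s < T, P * s + r < X) :
    ((Finset.range T).filter fun s => ¬ IsCyclicNum (P * s + r)).card ≤
      ((progression P r X).filter (¬ IsCyclicNum ·)).card := by
  refine Finset.card_le_card_of_injOn (fun s => P * s + r) (fun s hs => ?_) fun s _ t _ hst =>
    Nat.eq_of_mul_eq_mul_left hP (Nat.add_right_cancel hst)
  obtain ⟨hsT, hbad⟩ := Finset.mem_filter.1 hs
  refine Finset.mem_filter.2 ⟨mem_progression.2 ⟨⟨?_, hX s (Finset.mem_range.1 hsT)⟩, ?_⟩, hbad⟩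
  · exact hr.trans_le (Nat.le_add_left _ _)
  · exact Nat.modulus_mul_add_modEq_iff.2 rfl

theorem exists_isCyclicNum_mul_add_of_card_lt {a b T : ℕ} (hP : 0 < P) (ha : 0 < a) (hb : 0 < b)
    (haX : ∀ s < T, P * s + a < X) (hbX : ∀ s < T, P * s + b < X)
    (hcard : ((progression P a X).filter (¬ IsCyclicNum ·)).card +
      ((progression P b X).filter (¬ IsCyclicNum ·)).card < T) :
    ∃ s, IsCyclicNum (P * s + a) ∧ IsCyclicNum (P * s + b) := by
  by_contra! hno
  have hcover : Finset.range T ⊆ {s ∈ Finset.range T | ¬ IsCyclicNum (P * s + a)} ∪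
      {s ∈ Finset.range T | ¬ IsCyclicNum (P * s + b)} := by
    intro s hs
    rw [← Finset.filter_or]
    exact Finset.mem_filter.2 ⟨hs, not_and_or.1 fun h => hno s h.1 h.2⟩
  have hT := (Finset.card_le_card hcover).trans (Finset.card_union_le _ _)
  rw [Finset.card_range] at hT
  have hcard_a := card_filter_not_isCyclicNum_mul_add_le hP ha haX
  have hcard_b := card_filter_not_isCyclicNum_mul_add_le hP hb hbX
  omega

end Progression

section Primorial

theorem log_primorial_le (y : ℕ) : Real.log (primorial y) ≤ Real.log 4 * y := by
  simpa [Chebyshev.theta_eq_log_primorial] using Chebyshev.theta_le_log4_mul_x (Nat.cast_nonneg y)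

theorem log_div_self_le_two_div_log {x : ℝ} (hx : 1 < x) :
    Real.log x / x ≤ 2 / Real.log x := by
  have hlog : 0 < Real.log x := Real.log_pos hx
  have hquad := Real.quadratic_le_exp_of_nonneg hlog.le
  rw [Real.exp_log (by linarith)] at hquad
  rw [div_le_div_iff₀ (by linarith) hlog]
  nlinarith

theorem log_primorial_mul_sum_prime_inv_sq_le {y z : ℕ} (hy : 1 < y) (hyz : y ≤ z) :
    Real.log (primorial y) * ∑ p ∈ Finset.Ioc y z with p.Prime, ((p : ℝ) ^ 2)⁻¹ ≤
      4 / Real.log y := by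
  set S := ∑ p ∈ Finset.Ioc y z with p.Prime, ((p : ℝ) ^ 2)⁻¹
  have hlogy : 0 < Real.log y := Real.log_pos (by exact_mod_cast hy)
  have hlog4 : Real.log 4 ^ 2 ≤ 2 := by
    rw [Real.log_four_eq]
    nlinarith [Real.log_two_lt_d9, Real.log_two_gt_d9]
  rw [le_div_iff₀ hlogy]
  calc Real.log (primorial y) * S * Real.log y
      = Real.log (primorial y) * (S * Real.log y) := mul_assoc _ _ _
    _ ≤ Real.log 4 * y * (2 * Real.log 4 / y) :=
      mul_le_mul (log_primorial_le y) (sum_prime_inv_sq_mul_log_le (by omega) hyz)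
        (by positivity) (by positivity)
    _ = 2 * Real.log 4 ^ 2 := by field_simp
    _ ≤ 4 := by linarith

theorem log_primorial_mul_sum_add_inv_le {y z : ℕ} (hy : 1 < y) (hyz : y ≤ z) :
    Real.log (primorial y) * (∑ p ∈ Finset.Ioc y z with p.Prime, ((p : ℝ) ^ 2)⁻¹ +
      (primorial y : ℝ)⁻¹) ≤ 6 / Real.log y := by
  have hyP : (y : ℝ) ≤ primorial y := by exact_mod_cast le_primorial_self
  have hy' : (1 : ℝ) < y := by exact_mod_cast hy
  have hlogy : 0 < Real.log y := Real.log_pos hy'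
  have hinv : Real.log (primorial y) * (primorial y : ℝ)⁻¹ ≤ 2 / Real.log y :=
    (log_div_self_le_two_div_log (hy'.trans_le hyP)).trans (by gcongr)
  calc _ ≤ 4 / Real.log y + 2 / Real.log y := by
        rw [mul_add]
        exact add_le_add (log_primorial_mul_sum_prime_inv_sq_le hy hyz) hinv
    _ = 6 / Real.log y := by ring

theorem one_lt_of_log_pos {y : ℕ} (hy : 0 < Real.log y) : 1 < y := by
  by_contra! hle
  exact hy.not_ge (Real.log_nonpos y.cast_nonneg (by exact_mod_cast hle))

theorem card_progression_primorial_filter_not_isCyclicNum_lt {y r : ℕ} (hy : 1000 ≤ Real.log y)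
    (hr : r.Coprime (primorial y)) :
    (((progression (primorial y) r (primorial y ^ 6)).filter (¬ IsCyclicNum ·)).card : ℝ) <
      (primorial y : ℝ) ^ 5 / 4 := by
  have hy1 : 1 < y := one_lt_of_log_pos (by linarith)
  have hyP : y ≤ primorial y := le_primorial_self
  have hbad := card_progression_filter_not_isCyclicNum_le (X := primorial y ^ 6)
    (z := primorial y ^ 2) hr (primorial_pos y) (fun p hp => hp.dvd_primorial_iff.2)
    (pow_pos (primorial_pos y) 2) (by ring_nf; rfl)
  have hsum := log_primorial_mul_sum_add_inv_le hy1
    (hyP.trans (Nat.le_self_pow two_ne_zero (primorial y)))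
  set P := primorial y
  set S := ∑ p ∈ Finset.Ioc y (P ^ 2) with p.Prime, ((p : ℝ) ^ 2)⁻¹
  have hP : (0 : ℝ) < P := by exact_mod_cast primorial_pos y
  have hlogP : 1000 ≤ Real.log P :=
    hy.trans (Real.log_le_log (by positivity) (by exact_mod_cast hyP))
  calc _ ≤ 2 * (P : ℝ) ^ 5 * (3 + 12 * Real.log P) * (S + (P : ℝ)⁻¹) := by
        refine hbad.trans_eq ?_
        push_cast
        rw [Real.log_pow]
        field_simp
        norm_num
        ring
    _ ≤ 2 * (P : ℝ) ^ 5 * (13 * Real.log P) * (S + (P : ℝ)⁻¹) := by gcongr; linarith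
    _ = 26 * (P : ℝ) ^ 5 * (Real.log P * (S + (P : ℝ)⁻¹)) := by ring
    _ ≤ 26 * (P : ℝ) ^ 5 * (6 / 1000) := by gcongr; exact hsum.trans (by gcongr)
    _ < (P : ℝ) ^ 5 / 4 := by linarith [pow_pos hP 5]

theorem exists_isCyclicNum_add_two_of_log_ge {y : ℕ} (hy : 1000 ≤ Real.log y) :
    ∃ c, y ≤ c + 1 ∧ IsCyclicNum c ∧ IsCyclicNum (c + 2) := by
  have hy1 : 1 < y := one_lt_of_log_pos (by linarith)
  have hyP : y ≤ primorial y := le_primorial_self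
  have hbelow := card_progression_primorial_filter_not_isCyclicNum_lt (r := primorial y - 1) hy
    ((Nat.coprime_self_sub_left (by omega)).2 (Nat.coprime_one_left _))
  have habove := card_progression_primorial_filter_not_isCyclicNum_lt (r := primorial y + 1) hy
    (by simp)
  set P := primorial y
  have hP : 2 ≤ P := hy1.trans_le hyP
  have hP5 : 2 ≤ P ^ 5 := hP.trans (Nat.le_self_pow (by norm_num) P)
  have hrange (s : ℕ) (hs : s < P ^ 5 - 1) : P * s + (P + 1) < P ^ 6 := by
    calc P * s + (P + 1) < P * (s + 2) := by linarith
      _ ≤ P * P ^ 5 := Nat.mul_le_mul_left P (by omega)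
      _ = P ^ 6 := (pow_succ' P 5).symm
  have hcard : ((progression P (P - 1) (P ^ 6)).filter (¬ IsCyclicNum ·)).card +
      ((progression P (P + 1) (P ^ 6)).filter (¬ IsCyclicNum ·)).card < P ^ 5 - 1 := by
    have hP5' : (2 : ℝ) ≤ (P : ℝ) ^ 5 := by exact_mod_cast hP5
    rw [Nat.lt_sub_iff_add_lt, ← Nat.cast_lt (α := ℝ)]
    push_cast
    linarith
  obtain ⟨s, hbelow_cyclic, habove_cyclic⟩ := exists_isCyclicNum_mul_add_of_card_lt (by omega)
    (by omega) (by omega) (fun s hs => (hrange s hs).trans_le' (by omega)) hrange hcard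
  have hshift : P * s + (P - 1) + 2 = P * s + (P + 1) := by omega
  exact ⟨P * s + (P - 1), by omega, hbelow_cyclic, hshift ▸ habove_cyclic⟩

end Primorial

theorem infinite_twin_cyclics :
    {c : ℕ | IsCyclicNum c ∧ IsCyclicNum (c + 2)}.Infinite := by
  refine Set.infinite_of_forall_exists_gt fun N => ?_
  have hlog : ∀ᶠ y : ℕ in atTop, 1000 ≤ Real.log y :=
    (Real.tendsto_log_atTop.comp tendsto_natCast_atTop_atTop).eventually_ge_atTop 1000
  obtain ⟨y, hy, hNy⟩ := (hlog.and (eventually_ge_atTop (N + 2))).exists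
  obtain ⟨c, hyc, hc⟩ := exists_isCyclicNum_add_two_of_log_ge hy
  exact ⟨c, hc, by omega⟩
end
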